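/- arXiv:1509.06101 — 3 statements merged into one kernel-verified Lean document; each statement's English description precedes it below -/
import Mathlib

section
/- Let d = \sum_{\alpha\in S} (-1)^{p(\alpha)} \phi^\alpha u_\alpha + \sum_{\alpha\in S(1/2)} \phi^\alpha \Phi_\alpha + \phi^f + (1/2)\sum_{\alpha,\beta\in S} (-1)^{p(\alpha)} \phi^\alpha \phi^\beta \phi_{[u_\beta,u_\alpha]} be the element of the Poisson vertex algebra S(R). Then d has odd parity and satisfies {d_\lambda d} = 0. -/
open Polynomial

noncomputable section

/-- A finite-dimensional Lie superalgebra `g` over `ℂ` together with an even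
`sl₂`-triple `(e, h = 2x, f)` and a supersymmetric invariant bilinear form,
normalised by `(e|f) = 2(x|x) = 1`.  The parity of `g` is encoded by the grading
involution `σg` (`σg a = a` for even `a` and `σg a = -a` for odd `a`). -/
structure SuperSetup (g : Type) [AddCommGroup g] [Module ℂ g] where
  lie : g →ₗ[ℂ] g →ₗ[ℂ] g
  σg : g →ₗ[ℂ] g
  σg_invol : ∀ a, σg (σg a) = a
  σg_lie : ∀ a b, σg (lie a b) = lie (σg a) (σg b)
  lie_skew : ∀ a b, (σg a = a ∨ σg b = b) → lie a b = - lie b a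
  lie_skew_odd : ∀ a b, σg a = -a → σg b = -b → lie a b = lie b a
  jacobi : ∀ a b c, (σg a = a ∨ σg b = b) →
    lie a (lie b c) = lie (lie a b) c + lie b (lie a c)
  jacobi_odd : ∀ a b c, σg a = -a → σg b = -b →
    lie a (lie b c) = lie (lie a b) c - lie b (lie a c)
  form : g →ₗ[ℂ] g →ₗ[ℂ] ℂ
  form_invariant : ∀ a b c, form (lie a b) c = form a (lie b c)
  form_super : ∀ a b, form (σg a) (σg b) = form a b
  e : g
  x : g
  f : g
  e_even : σg e = e
  x_even : σg x = x
  f_even : σg f = f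
  lie_xe : lie x e = e
  lie_xf : lie x f = - f
  lie_ef : lie e f = (2 : ℂ) • x
  form_ef : form e f = 1
  form_xx : form x x = 1 / 2

namespace SuperSetup

variable {g : Type} [AddCommGroup g] [Module ℂ g]

/-- The `ad x`-eigenspace `g(i)`. -/
def gwt (D : SuperSetup g) (i : ℚ) : Submodule ℂ g :=
  LinearMap.ker (D.lie D.x - (i : ℂ) • LinearMap.id)

/-- `n = ⊕_{i > 0} g(i)`. -/
def nplus (D : SuperSetup g) : Submodule ℂ g := ⨆ i : {i : ℚ // 0 < i}, D.gwt i
/-- `n₋ = ⊕_{i < 0} g(i)`. -/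
def nminus (D : SuperSetup g) : Submodule ℂ g := ⨆ i : {i : ℚ // i < 0}, D.gwt i
/-- `m = ⊕_{i ≥ 1} g(i)`. -/
def mm (D : SuperSetup g) : Submodule ℂ g := ⨆ i : {i : ℚ // 1 ≤ i}, D.gwt i
/-- `⊕_{i ≤ 0} g(i)`. -/
def gle (D : SuperSetup g) : Submodule ℂ g := ⨆ i : {i : ℚ // i ≤ 0}, D.gwt i
/-- `⊕_{i ≤ 1} g(i)`. -/
def gle1 (D : SuperSetup g) : Submodule ℂ g := ⨆ i : {i : ℚ // i ≤ 1}, D.gwt i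
/-- `⊕_{i < 1} g(i)`. -/
def glt1 (D : SuperSetup g) : Submodule ℂ g := ⨆ i : {i : ℚ // i < 1}, D.gwt i
/-- The centraliser `g^f = {a ∈ g | [a, f] = 0}`. -/
def gf (D : SuperSetup g) : Submodule ℂ g := LinearMap.ker (D.lie.flip D.f)

end SuperSetup

/-- `a` is a homogeneous element of parity sign `ε ∈ {1, -1}`. -/
def IsParity {g : Type} [AddCommGroup g] [Module ℂ g] (D : SuperSetup g)
    (a : g) (ε : ℂ) : Prop :=
  (ε = 1 ∧ D.σg a = a) ∨ (ε = -1 ∧ D.σg a = -a)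

section PolyHelpers

variable {A : Type} [Ring A] [Algebra ℂ A]

/-- Apply the linear endomorphism `δ` to every coefficient of a polynomial. -/
def cmap (δ : A →ₗ[ℂ] A) (P : Polynomial A) : Polynomial A :=
  P.sum fun n c => Polynomial.monomial n (δ c)

/-- Substitution `λ ↦ -λ - ∂` (with `∂ = δ` acting on the coefficients). -/
def oppSubst (δ : A →ₗ[ℂ] A) (P : Polynomial A) : Polynomial A :=
  P.sum fun n c => ∑ k ∈ Finset.range (n + 1),
    Polynomial.monomial k ((((-1 : ℂ) ^ n * (n.choose k : ℂ))) • ((δ ^ (n - k)) c))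

/-- `[a_λ [b_μ c]]` as an element of `(A[λ])[μ]` (the outer variable is `μ`). -/
def jacLeft (Br : A →ₗ[ℂ] A →ₗ[ℂ] Polynomial A) (a : A) (P : Polynomial A) :
    Polynomial (Polynomial A) :=
  P.sum fun m c => Polynomial.monomial m (Br a c)

/-- `[b_μ [a_λ c]]` as an element of `(A[λ])[μ]` (the outer variable is `μ`). -/
def jacRight (Br : A →ₗ[ℂ] A →ₗ[ℂ] Polynomial A) (b : A) (P : Polynomial A) :
    Polynomial (Polynomial A) :=
  P.sum fun n c => (Br b c).sum fun m d => Polynomial.monomial m (Polynomial.monomial n d)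

/-- `Q(λ + μ)` as an element of `(A[λ])[μ]`. -/
def substAdd (Q : Polynomial A) : Polynomial (Polynomial A) :=
  Q.sum fun m c => ∑ k ∈ Finset.range (m + 1),
    Polynomial.monomial k (Polynomial.monomial (m - k) ((m.choose k : ℂ) • c))

/-- `[[a_λ b]_{λ+μ} c]` as an element of `(A[λ])[μ]`. -/
def jacMid (Br : A →ₗ[ℂ] A →ₗ[ℂ] Polynomial A) (P : Polynomial A) (c : A) :
    Polynomial (Polynomial A) :=
  P.sum fun j d => Polynomial.C (Polynomial.X ^ j : Polynomial A) * substAdd (Br d c)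

end PolyHelpers

/-- A Poisson vertex superalgebra structure on a unital associative `ℂ`-algebra `A`:
a supercommutative product (the parity being encoded by the involution `σ`), an even
derivation `δ = ∂`, and a `λ`-bracket `Br` (with values in `A[λ]`) satisfying
sesquilinearity, skewsymmetry, the Jacobi identity and the Leibniz rules. -/
structure PVA (A : Type) [Ring A] [Algebra ℂ A] where
  σ : A →ₐ[ℂ] A
  σ_invol : ∀ a, σ (σ a) = a
  supercomm : ∀ a b : A, (σ a = a ∨ σ b = b) → a * b = b * a
  supercomm_odd : ∀ a b : A, σ a = -a → σ b = -b → a * b = -(b * a)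
  δ : A →ₗ[ℂ] A
  δ_der : ∀ a b, δ (a * b) = δ a * b + a * δ b
  δ_even : ∀ a, σ (δ a) = δ (σ a)
  Br : A →ₗ[ℂ] A →ₗ[ℂ] Polynomial A
  br_parity : ∀ a b n, σ ((Br a b).coeff n) = (Br (σ a) (σ b)).coeff n
  sesq_left : ∀ a b, Br (δ a) b = -(Polynomial.X * Br a b)
  sesq_right : ∀ a b, Br a (δ b) = Polynomial.X * Br a b + cmap δ (Br a b)
  leibniz : ∀ a b c, (σ a = a ∨ σ b = b) →
    Br a (b * c) = Polynomial.C b * Br a c + Br a b * Polynomial.C c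
  leibniz_odd : ∀ a b c, σ a = -a → σ b = -b →
    Br a (b * c) = -(Polynomial.C b * Br a c) + Br a b * Polynomial.C c
  skew : ∀ a b, (σ a = a ∨ σ b = b) → Br a b = - oppSubst δ (Br b a)
  skew_odd : ∀ a b, σ a = -a → σ b = -b → Br a b = oppSubst δ (Br b a)
  jac : ∀ a b c, (σ a = a ∨ σ b = b) →
    jacLeft Br a (Br b c) = jacMid Br (Br a b) c + jacRight Br b (Br a c)
  jac_odd : ∀ a b c, σ a = -a → σ b = -b →
    jacLeft Br a (Br b c) = jacMid Br (Br a b) c - jacRight Br b (Br a c)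

/-- Dual bases `{u_α}, {u^α}` (indexed by `I = \bar S`) of the Lie superalgebra,
compatible with the parity and the `ad x`-grading, with `(u_α | u^β) = δ_{αβ}`. -/
structure BasisData {g : Type} [AddCommGroup g] [Module ℂ g] (D : SuperSetup g)
    (I : Type) [Fintype I] [DecidableEq I] where
  u : I → g
  udual : I → g
  jdeg : I → ℚ
  par : I → Bool
  hu : ∀ α, u α ∈ D.gwt (jdeg α)
  hud : ∀ α, udual α ∈ D.gwt (-(jdeg α))
  hσu : ∀ α, D.σg (u α) = (if par α then (-1 : ℂ) else 1) • u α
  hσud : ∀ α, D.σg (udual α) = (if par α then (-1 : ℂ) else 1) • udual α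
  hdual : ∀ α β, D.form (u α) (udual β) = if α = β then 1 else 0
  compl : ∀ a : g, (∑ α, D.form a (udual α) • u α) = a
  basisu : LinearIndependent ℂ u
  spanu : Submodule.span ℂ (Set.range u) = ⊤

namespace BasisData

variable {g : Type} [AddCommGroup g] [Module ℂ g] {D : SuperSetup g}
  {I : Type} [Fintype I] [DecidableEq I]

/-- The index set `S` of the dual bases of `n` and `n₋`. -/
def S (Bs : BasisData D I) : Finset I := Finset.univ.filter fun α => 0 < Bs.jdeg α

/-- The index set `S(1/2)` of the basis of `g(1/2)`. -/
def Shalf (Bs : BasisData D I) : Finset I := Finset.univ.filter fun α => Bs.jdeg α = 1 / 2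

/-- The sign `(-1)^{p(α)}`. -/
def sgn (Bs : BasisData D I) (α : I) : ℂ := if Bs.par α then -1 else 1

/-- The projection of `g` onto `⊕_{i ≤ 0} g(i)` determined by the dual bases. -/
def πle (Bs : BasisData D I) (a : g) : g :=
  ∑ α ∈ Finset.univ.filter (fun α => Bs.jdeg α ≤ 0), D.form a (Bs.udual α) • Bs.u α

end BasisData

/-- A realization of the Poisson vertex algebra `S(R)` of the classical BRST complex,
where `R = Cur_k(g) ⊕ R_ch ⊕ R_ne`:  `ι` are the currents, `φc a = φ_{π₊ a}`,
`φd a = φ^{π₋ a}` are the charged free fermions and `Φn a = Φ_{π_{1/2} a}` are the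
neutral free fermions, with the `λ`-brackets of the generators as in the paper. -/
structure BRST {g : Type} [AddCommGroup g] [Module ℂ g] (D : SuperSetup g)
    {I : Type} [Fintype I] [DecidableEq I] (Bs : BasisData D I)
    {A : Type} [Ring A] [Algebra ℂ A] (P : PVA A) (k : ℂ) where
  ι : g →ₗ[ℂ] A
  φc : g →ₗ[ℂ] A
  φd : g →ₗ[ℂ] A
  Φn : g →ₗ[ℂ] A
  σι : ∀ a, P.σ (ι a) = ι (D.σg a)
  σφc : ∀ a, P.σ (φc a) = - φc (D.σg a)
  σφd : ∀ a, P.σ (φd a) = - φd (D.σg a)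
  σΦ : ∀ a, P.σ (Φn a) = Φn (D.σg a)
  φc_proj : ∀ i : ℚ, i ≤ 0 → ∀ a ∈ D.gwt i, φc a = 0
  φd_proj : ∀ i : ℚ, 0 ≤ i → ∀ a ∈ D.gwt i, φd a = 0
  Φn_proj : ∀ i : ℚ, i ≠ 1 / 2 → ∀ a ∈ D.gwt i, Φn a = 0
  br_cur : ∀ a b, P.Br (ι a) (ι b) =
    Polynomial.C (ι (D.lie a b)) + Polynomial.monomial 1 (algebraMap ℂ A (k * D.form a b))
  br_φφ : ∀ a b, P.Br (φc a) (φc b) = 0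
  br_φdφd : ∀ a b, P.Br (φd a) (φd b) = 0
  br_φφd : ∀ i j : ℚ, 0 < i → j < 0 → ∀ a ∈ D.gwt i, ∀ b ∈ D.gwt j,
    P.Br (φc a) (φd b) = Polynomial.C (algebraMap ℂ A (D.form a b))
  br_ΦΦ : ∀ a ∈ D.gwt (1 / 2 : ℚ), ∀ b ∈ D.gwt (1 / 2 : ℚ),
    P.Br (Φn a) (Φn b) = Polynomial.C (algebraMap ℂ A (D.form D.f (D.lie a b)))
  br_curφc : ∀ a b, P.Br (ι a) (φc b) = 0
  br_curφd : ∀ a b, P.Br (ι a) (φd b) = 0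
  br_curΦ : ∀ a b, P.Br (ι a) (Φn b) = 0
  br_φcΦ : ∀ a b, P.Br (φc a) (Φn b) = 0
  br_φdΦ : ∀ a b, P.Br (φd a) (Φn b) = 0

namespace BRST

variable {g : Type} [AddCommGroup g] [Module ℂ g] {D : SuperSetup g}
  {I : Type} [Fintype I] [DecidableEq I] {Bs : BasisData D I}
  {A : Type} [Ring A] [Algebra ℂ A] {P : PVA A} {k : ℂ}

/-- The element
`d = ∑_{α∈S} (-1)^{p(α)} φ^α u_α + ∑_{α∈S(1/2)} φ^α Φ_α + φ^f
  + (1/2) ∑_{α,β∈S} (-1)^{p(α)} φ^α φ^β φ_{[u_β, u_α]}` of `S(R)`. -/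
def dd (R : BRST D Bs P k) : A :=
  (∑ α ∈ Bs.S, Bs.sgn α • (R.φd (Bs.udual α) * R.ι (Bs.u α)))
    + (∑ α ∈ Bs.Shalf, R.φd (Bs.udual α) * R.Φn (Bs.u α))
    + R.φd D.f
    + (1 / 2 : ℂ) • ∑ α ∈ Bs.S, ∑ β ∈ Bs.S,
        Bs.sgn α • (R.φd (Bs.udual α) * (R.φd (Bs.udual β) * R.φc (D.lie (Bs.u β) (Bs.u α))))

/-- The differential `d_{(0)} : S(R) → S(R)`, `a ↦ {d_λ a}|_{λ=0}`. -/
def d0 (R : BRST D Bs P k) : A →ₗ[ℂ] A where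
  toFun a := (P.Br R.dd a).coeff 0
  map_add' a b := by simp
  map_smul' c a := by simp

/-- The building block `J_a = a + ∑_{α∈S} φ^α φ_{[u_α, a]}`. -/
def Jel (R : BRST D Bs P k) (a : g) : A :=
  R.ι a + ∑ α ∈ Bs.S, R.φd (Bs.udual α) * R.φc (D.lie (Bs.u α) a)

/-- The building block `K_a = J_{π_≤ a} - (-1)^{p(a)} Φ_a - (a|f)`
(for `a` homogeneous of parity sign `ε`). -/
def Kel (R : BRST D Bs P k) (a : g) (ε : ℂ) : A :=
  R.Jel (Bs.πle a) - ε • R.Φn a - algebraMap ℂ A (D.form a D.f)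

/-- The subalgebra `S(R₋)` of `S(R)`, where
`R₋ = ℂ[∂] ⊗ (J_{g_≤} ⊕ φ^{n₋} ⊕ Φ_{g(1/2)})`. -/
def Aminus (R : BRST D Bs P k) : Subalgebra ℂ A :=
  Algebra.adjoin ℂ
    ({y : A | ∃ (n : ℕ) (i : ℚ) (a : g), i ≤ 0 ∧ a ∈ D.gwt i ∧ y = (P.δ ^ n) (R.Jel a)}
      ∪ {y : A | ∃ (n : ℕ) (j : ℚ) (b : g), j < 0 ∧ b ∈ D.gwt j ∧ y = (P.δ ^ n) (R.φd b)}
      ∪ {y : A | ∃ (n : ℕ) (c : g), c ∈ D.gwt (1 / 2 : ℚ) ∧ y = (P.δ ^ n) (R.Φn c)})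

/-- The subalgebra `S(R₊)` of `S(R)`, where `R₊ = ℂ[∂] ⊗ (φ_n ⊕ d_{(0)}(φ_n))`. -/
def Aplus (R : BRST D Bs P k) : Subalgebra ℂ A :=
  Algebra.adjoin ℂ
    ({y : A | ∃ (n : ℕ) (i : ℚ) (a : g), 0 < i ∧ a ∈ D.gwt i ∧ y = (P.δ ^ n) (R.φc a)}
      ∪ {y : A | ∃ (n : ℕ) (i : ℚ) (a : g), 0 < i ∧ a ∈ D.gwt i ∧
          y = (P.δ ^ n) (R.d0 (R.φc a))})

end BRST


/-! ### Helper lemmas -/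

namespace BRSTAux

/-- The Koszul sign of two signs. -/
def kap (a b : ℂ) : ℂ := (1 + a + b - a * b) / 2

section LieLevel

variable {g : Type} [AddCommGroup g] [Module ℂ g] (D : SuperSetup g)

theorem mem_gwt {i : ℚ} {a : g} : a ∈ D.gwt i ↔ D.lie D.x a = (i : ℂ) • a := by
  simp [SuperSetup.gwt, sub_eq_zero]

theorem lie_mem {i j : ℚ} {a b : g} (ha : a ∈ D.gwt i) (hb : b ∈ D.gwt j) :
    D.lie a b ∈ D.gwt (i + j) := by
  rw [mem_gwt] at *
  rw [D.jacobi _ _ _ (Or.inl D.x_even), ha, hb]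
  simp [add_smul]

theorem form_wt {i j : ℚ} {a b : g} (ha : a ∈ D.gwt i) (hb : b ∈ D.gwt j) (h : i + j ≠ 0) :
    D.form a b = 0 := by
  rw [mem_gwt] at *
  have h1 := D.form_invariant a D.x b
  rw [D.lie_skew a D.x (Or.inr D.x_even), ha, hb] at h1
  simp at h1
  have h2 : ((i + j : ℚ) : ℂ) * D.form a b = 0 := by
    push_cast
    linear_combination -h1
  rcases mul_eq_zero.1 h2 with h3 | h3
  · exact absurd (by exact_mod_cast h3) h
  · exact h3

theorem lie_skew_kap {a b : g} {s t : ℂ} (hs : s = 1 ∨ s = -1) (ht : t = 1 ∨ t = -1)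
    (ha : D.σg a = s • a) (hb : D.σg b = t • b) :
    D.lie a b = (-kap s t) • D.lie b a := by
  rcases hs with rfl | rfl
  · rw [D.lie_skew a b (Or.inl (by simpa using ha))]
    simp [kap]
  rcases ht with rfl | rfl
  · rw [D.lie_skew a b (Or.inr (by simpa using hb))]
    simp [kap]
  · rw [D.lie_skew_odd a b (by simpa using ha) (by simpa using hb)]
    norm_num [kap]

theorem jacobi_kap {a b : g} {s t : ℂ} (hs : s = 1 ∨ s = -1) (ht : t = 1 ∨ t = -1)
    (ha : D.σg a = s • a) (hb : D.σg b = t • b) (c : g) :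
    D.lie a (D.lie b c) = D.lie (D.lie a b) c + kap s t • D.lie b (D.lie a c) := by
  rcases hs with rfl | rfl
  · rw [D.jacobi a b c (Or.inl (by simpa using ha))]
    simp [kap]
  rcases ht with rfl | rfl
  · rw [D.jacobi a b c (Or.inr (by simpa using hb))]
    simp [kap]
  · rw [D.jacobi_odd a b c (by simpa using ha) (by simpa using hb)]
    norm_num [kap, sub_eq_add_neg]

theorem form_f_symm (a b : g) : D.form D.f (D.lie a b) = D.form (D.lie a b) D.f := by
  rw [← D.form_invariant, D.lie_skew D.f a (Or.inl D.f_even), map_neg, LinearMap.neg_apply,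
    D.form_invariant, D.lie_skew D.f b (Or.inl D.f_even), map_neg, neg_neg, D.form_invariant]

variable {D} {I : Type} [Fintype I] [DecidableEq I] (Bs : BasisData D I)

theorem sgn_cases (α : I) : Bs.sgn α = 1 ∨ Bs.sgn α = -1 := by
  unfold BasisData.sgn
  split_ifs <;> simp

theorem sgn_sq (α : I) : Bs.sgn α * Bs.sgn α = 1 := by
  rcases sgn_cases Bs α with h | h <;> rw [h] <;> norm_num

theorem sig_u (α : I) : D.σg (Bs.u α) = Bs.sgn α • Bs.u α := Bs.hσu α
theorem sig_ud (α : I) : D.σg (Bs.udual α) = Bs.sgn α • Bs.udual α := Bs.hσud α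

theorem sig_lie {a b : g} {s t : ℂ} (ha : D.σg a = s • a) (hb : D.σg b = t • b) :
    D.σg (D.lie a b) = (s * t) • D.lie a b := by
  rw [D.σg_lie, ha, hb]
  simp [smul_smul, mul_comm]

theorem form_sgn {c : g} {s : ℂ} (hs : s = 1 ∨ s = -1) (hc : D.σg c = s • c) (γ : I) :
    D.form c (Bs.udual γ) * Bs.sgn γ = s * D.form c (Bs.udual γ) := by
  have h := D.form_super c (Bs.udual γ)
  rw [hc, sig_ud] at h
  simp at h
  rcases hs with rfl | rfl <;> rcases sgn_cases Bs γ with h2 | h2 <;> rw [h2] at h ⊢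
  · ring
  · linear_combination h
  · linear_combination -h
  · ring

theorem mem_S {α : I} : α ∈ Bs.S ↔ 0 < Bs.jdeg α := by simp [BasisData.S]
theorem mem_Shalf {α : I} : α ∈ Bs.Shalf ↔ Bs.jdeg α = 1 / 2 := by simp [BasisData.Shalf]

theorem form_u_zero {i : ℚ} {c : g} (hc : c ∈ D.gwt i) (γ : I) (h : Bs.jdeg γ ≠ i) :
    D.form c (Bs.udual γ) = 0 := by
  apply form_wt D hc (Bs.hud γ)
  intro h2
  apply h
  linarith

/-- Expansion over a subset of indices containing all of the given degree. -/
theorem expand {M : Type} [AddCommGroup M] [Module ℂ M] (F : g →ₗ[ℂ] M) (T : Finset I)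
    {i : ℚ} {c : g} (hc : c ∈ D.gwt i) (hT : ∀ γ, Bs.jdeg γ = i → γ ∈ T) :
    ∑ γ ∈ T, D.form c (Bs.udual γ) • F (Bs.u γ) = F c := by
  conv_rhs => rw [← Bs.compl c]
  rw [map_sum]
  simp only [map_smul]
  apply Finset.sum_subset (Finset.subset_univ T)
  intro γ _ hγ
  rw [form_u_zero Bs hc γ (fun h => hγ (hT γ h)), zero_smul]

theorem wt_exists {i : ℚ} {c : g} (hc : c ∈ D.gwt i) (h0 : c ≠ 0) : ∃ γ, Bs.jdeg γ = i := by
  by_contra hcon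
  push Not at hcon
  apply h0
  rw [← Bs.compl c]
  apply Finset.sum_eq_zero
  intro γ _
  rw [form_u_zero Bs hc γ (hcon γ), zero_smul]

theorem form_x_ne : D.x ≠ 0 := by
  intro h
  have := D.form_xx
  rw [h] at this
  simp at this

attribute [local instance] LieRing.ofAssociativeRing

variable (D) in
theorem sl2 : IsSl2Triple (L := Module.End ℂ g) ((2 : ℂ) • D.lie D.x) (D.lie D.e) (D.lie D.f) where
  h_ne_zero := by
    intro h
    have h1 : D.lie D.x D.e = 0 := by
      have := congrArg (fun F : Module.End ℂ g => F D.e) h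
      simpa using this
    rw [D.lie_xe] at h1
    have := D.form_ef
    rw [h1] at this
    simp at this
  lie_e_f := by
    ext c
    simp [Ring.lie_def, D.jacobi D.e D.f c (Or.inl D.e_even), D.lie_ef]
  lie_h_e_nsmul := by
    ext c
    simp [Ring.lie_def, D.jacobi D.x D.e c (Or.inl D.x_even), D.lie_xe, two_smul]
    abel
  lie_h_f_nsmul := by
    ext c
    simp [Ring.lie_def, D.jacobi D.x D.f c (Or.inl D.x_even), D.lie_xf, two_smul]
    abel

include Bs in
theorem half_int {i : ℚ} {a : g} (ha : a ∈ D.gwt i) (h0 : a ≠ 0) : ∃ n : ℤ, 2 * i = n := by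
  classical
  have hfin : Module.Finite ℂ g := ⟨⟨Finset.univ.image Bs.u, by simpa using Bs.spanu⟩⟩
  have he : D.e ∈ D.gwt 1 := by rw [mem_gwt, D.lie_xe]; simp
  have hpow : ∀ n : ℕ, ((D.lie D.e) ^ n : Module.End ℂ g) a ∈ D.gwt (i + n) := by
    intro n
    induction n with
    | zero => simpa using ha
    | succ n ih =>
      rw [pow_succ', Module.End.mul_apply]
      have := lie_mem D he ih
      convert this using 1
      push_cast
      ring_nf
  have hex : ∃ n : ℕ, ((D.lie D.e) ^ n : Module.End ℂ g) a = 0 := by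
    by_contra hcon
    push Not at hcon
    choose γ hγ using fun n => wt_exists Bs (hpow n) (hcon n)
    apply not_injective_infinite_finite γ
    intro m n hmn
    have h1 := hγ m
    rw [hmn, hγ n] at h1
    have : (n : ℚ) = m := by linarith
    exact_mod_cast this.symm
  classical
  obtain ⟨n, hn, hn'⟩ : ∃ n : ℕ, ((D.lie D.e) ^ n : Module.End ℂ g) a ≠ 0 ∧
      ((D.lie D.e) ^ (n + 1) : Module.End ℂ g) a = 0 := by
    by_contra hcon
    push Not at hcon
    obtain ⟨n, hn⟩ := hex
    have : ∀ n : ℕ, ((D.lie D.e) ^ n : Module.End ℂ g) a ≠ 0 := by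
      intro n
      induction n with
      | zero => simpa using h0
      | succ n ih => exact hcon n ih
    exact this n hn
  have hp : (sl2 D).HasPrimitiveVectorWith (((D.lie D.e) ^ n : Module.End ℂ g) a)
      (2 * ((i : ℂ) + n)) := by
    refine ⟨hn, ?_, ?_⟩
    · have := (mem_gwt D).1 (hpow n)
      simp [this, mul_smul]
    · rw [pow_succ', Module.End.mul_apply] at hn'
      simpa using hn'
  obtain ⟨m, hm⟩ := hp.exists_nat
  refine ⟨m - 2 * n, ?_⟩
  have : (2 * (i + n) : ℚ) = m := by exact_mod_cast hm
  push_cast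
  linarith

theorem half_int_u (α : I) : ∃ n : ℤ, 2 * Bs.jdeg α = n :=
  half_int Bs (Bs.hu α) (Bs.basisu.ne_zero α)

theorem half_le {α : I} (h : α ∈ Bs.S) : 1 / 2 ≤ Bs.jdeg α := by
  rw [mem_S] at h
  obtain ⟨n, hn⟩ := half_int_u Bs α
  have h1 : (0 : ℚ) < n := by linarith
  have h2 : 0 < n := by exact_mod_cast h1
  have h3 : (1 : ℚ) ≤ n := by exact_mod_cast h2
  linarith

end LieLevel

section PVALevel

variable {A : Type} [Ring A] [Algebra ℂ A] (P : PVA A)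

/-- `a` is homogeneous with parity sign `ε`. -/
def Hm (a : A) (ε : ℂ) : Prop := (ε = 1 ∨ ε = -1) ∧ P.σ a = ε • a

variable {P}

theorem Hm.congr {a : A} {ε η : ℂ} (h : Hm P a ε) (e : ε = η) : Hm P a η := e ▸ h

theorem Hm.mul {a b : A} {ε η : ℂ} (ha : Hm P a ε) (hb : Hm P b η) : Hm P (a * b) (ε * η) := by
  refine ⟨?_, ?_⟩
  · rcases ha.1 with h | h <;> rcases hb.1 with h' | h' <;> simp [h, h']
  · rw [map_mul, ha.2, hb.2, smul_mul_smul_comm]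

theorem Hm.smul {a : A} {ε : ℂ} (ha : Hm P a ε) (c : ℂ) : Hm P (c • a) ε :=
  ⟨ha.1, by rw [map_smul, ha.2, smul_comm]⟩

theorem Hm.sum {J : Type} {T : Finset J} {F : J → A} {ε : ℂ} (hε : ε = 1 ∨ ε = -1)
    (h : ∀ i ∈ T, Hm P (F i) ε) : Hm P (∑ i ∈ T, F i) ε :=
  ⟨hε, by rw [map_sum, Finset.smul_sum]; exact Finset.sum_congr rfl fun i hi => (h i hi).2⟩

theorem Hm.add {a b : A} {ε : ℂ} (ha : Hm P a ε) (hb : Hm P b ε) : Hm P (a + b) ε :=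
  ⟨ha.1, by rw [map_add, ha.2, hb.2, smul_add]⟩

theorem comm_kap {a b : A} {ε η : ℂ} (ha : Hm P a ε) (hb : Hm P b η) :
    a * b = kap ε η • (b * a) := by
  obtain ⟨rfl | rfl, ha⟩ := ha
  · rw [P.supercomm a b (Or.inl (by simpa using ha))]
    simp [kap]
  obtain ⟨rfl | rfl, hb⟩ := hb
  · rw [P.supercomm a b (Or.inr (by simpa using hb))]
    simp [kap]
  · rw [P.supercomm_odd a b (by simpa using ha) (by simpa using hb)]
    norm_num [kap]

theorem leibC {a b c z w : A} {ε η : ℂ} (ha : Hm P a ε) (hb : Hm P b η)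
    (h1 : P.Br a b = C z) (h2 : P.Br a c = C w) :
    P.Br a (b * c) = C (kap ε η • (b * w) + z * c) := by
  obtain ⟨rfl | rfl, ha⟩ := ha
  · rw [P.leibniz a b c (Or.inl (by simpa using ha)), h1, h2]
    simp [kap]
  obtain ⟨rfl | rfl, hb⟩ := hb
  · rw [P.leibniz a b c (Or.inr (by simpa using hb)), h1, h2]
    simp [kap]
  · rw [P.leibniz_odd a b c (by simpa using ha) (by simpa using hb), h1, h2]
    norm_num [kap]

theorem oppC (z : A) : oppSubst P.δ (C z) = C z := by
  rw [oppSubst, Polynomial.sum_C_index] <;> simp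

theorem skewC {a b z : A} {ε η : ℂ} (ha : Hm P a ε) (hb : Hm P b η) (h : P.Br b a = C z) :
    P.Br a b = C ((-kap ε η) • z) := by
  obtain ⟨rfl | rfl, ha⟩ := ha
  · rw [P.skew a b (Or.inl (by simpa using ha)), h, oppC]
    simp [kap]
  obtain ⟨rfl | rfl, hb⟩ := hb
  · rw [P.skew a b (Or.inr (by simpa using hb)), h, oppC]
    simp [kap]
  · rw [P.skew_odd a b (by simpa using ha) (by simpa using hb), h, oppC]
    norm_num [kap]

theorem skew0 {a b : A} {ε η : ℂ} (ha : Hm P a ε) (hb : Hm P b η) (h : P.Br b a = 0) :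
    P.Br a b = C 0 := by
  rw [skewC ha hb (z := 0) (by simpa using h), smul_zero]

theorem br_sum {J : Type} {T : Finset J} {F : J → A} {z : J → A} {a : A}
    (h : ∀ i ∈ T, P.Br a (F i) = C (z i)) : P.Br a (∑ i ∈ T, F i) = C (∑ i ∈ T, z i) := by
  rw [map_sum, map_sum]
  exact Finset.sum_congr rfl h

theorem br_smul {a b z : A} (c : ℂ) (h : P.Br a b = C z) : P.Br a (c • b) = C (c • z) := by
  rw [map_smul, h, Polynomial.smul_C]

end PVALevel

section BRSTLevel

variable {g : Type} [AddCommGroup g] [Module ℂ g] {D : SuperSetup g}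
  {I : Type} [Fintype I] [DecidableEq I] {Bs : BasisData D I}
  {A : Type} [Ring A] [Algebra ℂ A] {P : PVA A} {k : ℂ} (R : BRST D Bs P k)

theorem kap_neg1 (t : ℂ) : kap (-1) t = t := by unfold kap; ring
theorem kap_neg1' (t : ℂ) : kap t (-1) = t := by unfold kap; ring

theorem hX (α : I) : Hm P (R.φd (Bs.udual α)) (-Bs.sgn α) := by
  refine ⟨?_, ?_⟩
  · rcases sgn_cases Bs α with h | h <;> simp [h]
  · rw [R.σφd, sig_ud, map_smul, neg_smul]

theorem hY {c : g} {s : ℂ} (hs : s = 1 ∨ s = -1) (hc : D.σg c = s • c) : Hm P (R.φc c) (-s) := by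
  refine ⟨?_, ?_⟩
  · rcases hs with h | h <;> simp [h]
  · rw [R.σφc, hc, map_smul, neg_smul]

theorem hU (α : I) : Hm P (R.ι (Bs.u α)) (Bs.sgn α) :=
  ⟨sgn_cases Bs α, by rw [R.σι, sig_u, map_smul]⟩

theorem hN (α : I) : Hm P (R.Φn (Bs.u α)) (Bs.sgn α) :=
  ⟨sgn_cases Bs α, by rw [R.σΦ, sig_u, map_smul]⟩

theorem hF : Hm P (R.φd D.f) (-1) :=
  ⟨Or.inr rfl, by rw [R.σφd, D.f_even, neg_smul, one_smul]⟩

theorem sgn_mul_cases (α β : I) : Bs.sgn β * Bs.sgn α = 1 ∨ Bs.sgn β * Bs.sgn α = -1 := by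
  rcases sgn_cases Bs α with h | h <;> rcases sgn_cases Bs β with h' | h' <;> simp [h, h']

theorem sig_uu (α β : I) :
    D.σg (D.lie (Bs.u β) (Bs.u α)) = (Bs.sgn β * Bs.sgn α) • D.lie (Bs.u β) (Bs.u α) :=
  sig_lie (sig_u Bs β) (sig_u Bs α)

theorem hYY (α β : I) :
    Hm P (R.φc (D.lie (Bs.u β) (Bs.u α))) (-(Bs.sgn β * Bs.sgn α)) :=
  hY R (sgn_mul_cases α β) (sig_uu α β)

theorem wt_uu (α β : I) : D.lie (Bs.u β) (Bs.u α) ∈ D.gwt (Bs.jdeg β + Bs.jdeg α) :=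
  lie_mem D (Bs.hu β) (Bs.hu α)

/-- The current part of `d`. -/
def d1 : A := ∑ α ∈ Bs.S, Bs.sgn α • (R.φd (Bs.udual α) * R.ι (Bs.u α))
/-- The neutral part of `d`. -/
def d2 : A := ∑ α ∈ Bs.Shalf, R.φd (Bs.udual α) * R.Φn (Bs.u α)
/-- The linear part of `d`. -/
def d3 : A := R.φd D.f
/-- The cubic part of `d`. -/
def d4 : A := (1 / 2 : ℂ) • ∑ α ∈ Bs.S, ∑ β ∈ Bs.S,
        Bs.sgn α • (R.φd (Bs.udual α) * (R.φd (Bs.udual β) * R.φc (D.lie (Bs.u β) (Bs.u α))))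

theorem dd_eq : R.dd = d1 R + d2 R + d3 R + d4 R := rfl

theorem hd1 : Hm P (d1 R) (-1) :=
  Hm.sum (Or.inr rfl) fun α _ => (((hX R α).mul (hU R α)).congr
    (by linear_combination -sgn_sq Bs α)).smul _

theorem hd2 : Hm P (d2 R) (-1) :=
  Hm.sum (Or.inr rfl) fun α _ => (((hX R α).mul (hN R α)).congr
    (by linear_combination -sgn_sq Bs α))

theorem hd3 : Hm P (d3 R) (-1) := hF R

theorem hd4 : Hm P (d4 R) (-1) :=
  (Hm.sum (Or.inr rfl) fun α _ => Hm.sum (Or.inr rfl) fun β _ =>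
    (((hX R α).mul ((hX R β).mul (hYY R α β))).congr
      (by linear_combination (-1 - (Bs.sgn β * Bs.sgn β - 1)) * sgn_sq Bs α
            - sgn_sq Bs β)).smul _).smul _

theorem f_wt : D.f ∈ D.gwt (-1) := by rw [mem_gwt, D.lie_xf]; simp

theorem bYX {c : g} {i : ℚ} (hi : 0 < i) (hc : c ∈ D.gwt i) {γ : I} (hγ : γ ∈ Bs.S) :
    P.Br (R.φc c) (R.φd (Bs.udual γ)) = C (algebraMap ℂ A (D.form c (Bs.udual γ))) :=
  R.br_φφd i (-Bs.jdeg γ) hi (by have := (mem_S Bs).1 hγ; linarith) c hc _ (Bs.hud γ)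

theorem bXX (a b : g) : P.Br (R.φd a) (R.φd b) = C 0 := by rw [R.br_φdφd, map_zero]

section phi

variable {c : g} {s : ℂ} (hs : s = 1 ∨ s = -1) (hσ : D.σg c = s • c)
  {i : ℚ} (hi : 0 < i) (hc : c ∈ D.gwt i)
include hs hσ hi hc

theorem y1 : P.Br (R.φc c) (d1 R) = C (s • R.ι c) := by
  have h : ∀ γ ∈ Bs.S, P.Br (R.φc c) (Bs.sgn γ • (R.φd (Bs.udual γ) * R.ι (Bs.u γ))) =
      C (s • (D.form c (Bs.udual γ) • R.ι (Bs.u γ))) := by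
    intro γ hγ
    rw [br_smul _ (leibC (hY R hs hσ) (hX R γ) (bYX R hi hc hγ)
      (skew0 (hY R hs hσ) (hU R γ) (R.br_curφc _ _)))]
    congr 1
    rw [mul_zero, smul_zero, zero_add, ← Algebra.smul_def, smul_smul, smul_smul, mul_comm,
      form_sgn Bs hs hσ]
  rw [d1, br_sum h, ← Finset.smul_sum, expand Bs R.ι Bs.S hc]
  intro γ hγ
  rw [mem_S, hγ]
  exact hi

theorem d1Y : P.Br (d1 R) (R.φc c) = C (R.ι c) := by
  rw [skewC (hd1 R) (hY R hs hσ) (y1 R hs hσ hi hc), kap_neg1, smul_smul]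
  rcases hs with rfl | rfl <;> simp

theorem d2Y (hi2 : i ≠ 1 / 2) : P.Br (d2 R) (R.φc c) = C 0 := by
  have h : ∀ γ ∈ Bs.Shalf, P.Br (R.φc c) (R.φd (Bs.udual γ) * R.Φn (Bs.u γ)) = C 0 := by
    intro γ hγ
    have hγ' := (mem_Shalf Bs).1 hγ
    rw [leibC (hY R hs hσ) (hX R γ) (bYX R hi hc ((mem_S Bs).2 (by rw [hγ']; norm_num)))
      (w := 0) (by rw [R.br_φcΦ, map_zero]),
      form_u_zero Bs hc γ (by rw [hγ']; exact hi2.symm)]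
    simp
  have h2 := br_sum h
  rw [skewC (hd2 R) (hY R hs hσ) h2]
  simp

theorem d3Y : P.Br (d3 R) (R.φc c) = C (algebraMap ℂ A (s * D.form c D.f)) := by
  rw [skewC (hd3 R) (hY R hs hσ) (R.br_φφd i (-1) hi (by norm_num) c hc _ f_wt), kap_neg1]
  simp [Algebra.smul_def]

theorem y4 : P.Br (R.φc c) (d4 R) =
    C (s • ∑ β ∈ Bs.S, R.φd (Bs.udual β) * R.φc (D.lie (Bs.u β) c)) := by
  have hT : ∀ γ, Bs.jdeg γ = i → γ ∈ Bs.S := fun γ hγ => by rw [mem_S, hγ]; exact hi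
  have h : ∀ α ∈ Bs.S, ∀ β ∈ Bs.S, P.Br (R.φc c) (Bs.sgn α • (R.φd (Bs.udual α) *
      (R.φd (Bs.udual β) * R.φc (D.lie (Bs.u β) (Bs.u α))))) =
      C ((Bs.sgn α * kap (-s) (-Bs.sgn α)) • (D.form c (Bs.udual β) •
          (R.φd (Bs.udual α) * R.φc (D.lie (Bs.u β) (Bs.u α))))
        + s • (D.form c (Bs.udual α) •
          (R.φd (Bs.udual β) * R.φc (D.lie (Bs.u β) (Bs.u α))))) := by
    intro α hα β hβ
    rw [br_smul _ (leibC (hY R hs hσ) (hX R α) (bYX R hi hc hα)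
      (leibC (hY R hs hσ) (hX R β) (bYX R hi hc hβ) (w := 0) (by rw [R.br_φφ, map_zero])))]
    congr 1
    rw [mul_zero, smul_zero, zero_add, ← Algebra.smul_def, ← Algebra.smul_def, mul_smul_comm,
      smul_add, smul_smul, smul_smul, smul_smul, smul_smul,
      mul_comm (Bs.sgn α) (D.form c _), form_sgn Bs hs hσ]
  rw [d4, br_smul _ (br_sum fun α hα => br_sum fun β hβ => h α hα β hβ)]
  congr 1
  have e1 : ∀ α ∈ Bs.S, ∑ β ∈ Bs.S, (Bs.sgn α * kap (-s) (-Bs.sgn α)) •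
      (D.form c (Bs.udual β) • (R.φd (Bs.udual α) * R.φc (D.lie (Bs.u β) (Bs.u α)))) =
      s • (R.φd (Bs.udual α) * R.φc (D.lie (Bs.u α) c)) := by
    intro α hα
    have := expand Bs ((LinearMap.mulLeft ℂ (R.φd (Bs.udual α))) ∘ₗ R.φc ∘ₗ
      (D.lie.flip (Bs.u α))) Bs.S hc hT
    simp only [LinearMap.comp_apply, LinearMap.mulLeft_apply, LinearMap.flip_apply] at this
    rw [← Finset.smul_sum, this, lie_skew_kap D hs (sgn_cases Bs α) hσ (sig_u Bs α), map_smul,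
      mul_smul_comm, smul_smul]
    congr 1
    rcases hs with rfl | rfl <;> rcases sgn_cases Bs α with h | h <;> rw [h] <;>
      norm_num [kap]
  have e2 : ∀ β ∈ Bs.S, ∑ α ∈ Bs.S, s • (D.form c (Bs.udual α) •
          (R.φd (Bs.udual β) * R.φc (D.lie (Bs.u β) (Bs.u α)))) =
      s • (R.φd (Bs.udual β) * R.φc (D.lie (Bs.u β) c)) := by
    intro β hβ
    have := expand Bs ((LinearMap.mulLeft ℂ (R.φd (Bs.udual β))) ∘ₗ R.φc ∘ₗ
      (D.lie (Bs.u β))) Bs.S hc hT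
    simp only [LinearMap.comp_apply, LinearMap.mulLeft_apply] at this
    rw [← Finset.smul_sum, this]
  simp only [Finset.sum_add_distrib]
  rw [Finset.sum_congr rfl e1, Finset.sum_comm, Finset.sum_congr rfl e2, ← Finset.smul_sum]
  module

theorem d4Y : P.Br (d4 R) (R.φc c) =
    C (∑ β ∈ Bs.S, R.φd (Bs.udual β) * R.φc (D.lie (Bs.u β) c)) := by
  rw [skewC (hd4 R) (hY R hs hσ) (y4 R hs hσ hi hc), kap_neg1, smul_smul]
  rcases hs with rfl | rfl <;> simp

end phi

theorem d1X (γ : I) : P.Br (d1 R) (R.φd (Bs.udual γ)) = C 0 := by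
  have h : ∀ α ∈ Bs.S, P.Br (R.φd (Bs.udual γ))
      (Bs.sgn α • (R.φd (Bs.udual α) * R.ι (Bs.u α))) = C 0 := by
    intro α _
    rw [br_smul _ (leibC (hX R γ) (hX R α) (bXX R _ _)
      (skew0 (hX R γ) (hU R α) (R.br_curφd _ _)))]
    simp
  have h2 := br_sum h
  rw [skewC (hd1 R) (hX R γ) h2]
  simp

theorem d2X (γ : I) : P.Br (d2 R) (R.φd (Bs.udual γ)) = C 0 := by
  have h : ∀ α ∈ Bs.Shalf, P.Br (R.φd (Bs.udual γ))
      (R.φd (Bs.udual α) * R.Φn (Bs.u α)) = C 0 := by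
    intro α _
    rw [leibC (hX R γ) (hX R α) (bXX R _ _) (w := 0) (by rw [R.br_φdΦ, map_zero])]
    simp
  have h2 := br_sum h
  rw [skewC (hd2 R) (hX R γ) h2]
  simp

theorem d3X (γ : I) : P.Br (d3 R) (R.φd (Bs.udual γ)) = C 0 := bXX R _ _

theorem d4X {γ : I} (hγ : γ ∈ Bs.S) : P.Br (d4 R) (R.φd (Bs.udual γ)) =
    C ((1 / 2 : ℂ) • ∑ α ∈ Bs.S, ∑ β ∈ Bs.S, (Bs.sgn α *
      D.form (D.lie (Bs.u β) (Bs.u α)) (Bs.udual γ)) •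
        (R.φd (Bs.udual α) * R.φd (Bs.udual β))) := by
  have h : ∀ α ∈ Bs.S, ∀ β ∈ Bs.S, P.Br (R.φd (Bs.udual γ)) (Bs.sgn α • (R.φd (Bs.udual α) *
      (R.φd (Bs.udual β) * R.φc (D.lie (Bs.u β) (Bs.u α))))) =
      C (Bs.sgn γ • ((Bs.sgn α * D.form (D.lie (Bs.u β) (Bs.u α)) (Bs.udual γ)) •
        (R.φd (Bs.udual α) * R.φd (Bs.udual β)))) := by
    intro α hα β hβ
    have hpos : 0 < Bs.jdeg β + Bs.jdeg α := add_pos ((mem_S Bs).1 hβ) ((mem_S Bs).1 hα)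
    rw [br_smul _ (leibC (hX R γ) (hX R α) (bXX R _ _) (leibC (hX R γ) (hX R β) (bXX R _ _)
      (skewC (hX R γ) (hYY R α β) (bYX R hpos (wt_uu α β) hγ))))]
    congr 1
    have hf := form_sgn Bs (sgn_mul_cases (Bs := Bs) α β) (sig_uu α β) γ
    rw [zero_mul, zero_mul, add_zero, add_zero, Algebra.algebraMap_eq_smul_one]
    simp only [mul_smul_comm, mul_one, smul_smul]
    congr 1
    rcases sgn_cases Bs α with h1 | h1 <;> rcases sgn_cases Bs β with h2 | h2 <;>
      rcases sgn_cases Bs γ with h3 | h3 <;> rw [h1, h2, h3] at hf <;> rw [h1, h2, h3] <;>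
      norm_num [kap] at hf ⊢
  have h2 := br_smul (1 / 2) (br_sum fun α hα => br_sum fun β hβ => h α hα β hβ)
  rw [skewC (hd4 R) (hX R γ) h2, kap_neg1]
  congr 1
  simp only [Finset.smul_sum, smul_smul]
  refine Finset.sum_congr rfl fun α _ => Finset.sum_congr rfl fun β _ => ?_
  congr 1
  linear_combination (1 / 2) * (Bs.sgn α *
      D.form (D.lie (Bs.u β) (Bs.u α)) (Bs.udual γ)) * sgn_sq Bs γ

/-- Action of an odd element on the cubic part. -/
theorem der4 {E : A} (hE : Hm P E (-1)) {q : I → A} {r : I → I → A}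
    (hq : ∀ γ ∈ Bs.S, P.Br E (R.φd (Bs.udual γ)) = C (q γ))
    (hr : ∀ α ∈ Bs.S, ∀ β ∈ Bs.S, P.Br E (R.φc (D.lie (Bs.u β) (Bs.u α))) = C (r α β)) :
    P.Br E (d4 R) = C ((1 / 2 : ℂ) • ∑ α ∈ Bs.S, ∑ β ∈ Bs.S,
      (Bs.sgn α • (q α * (R.φd (Bs.udual β) * R.φc (D.lie (Bs.u β) (Bs.u α))))
        - R.φd (Bs.udual α) * (q β * R.φc (D.lie (Bs.u β) (Bs.u α)))
        + Bs.sgn β • (R.φd (Bs.udual α) * (R.φd (Bs.udual β) * r α β)))) := by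
  refine br_smul _ (br_sum fun α hα => br_sum fun β hβ => ?_)
  rw [br_smul _ (leibC hE (hX R α) (hq α hα) (leibC hE (hX R β) (hq β hβ) (hr α hα β hβ))),
    kap_neg1, kap_neg1]
  congr 1
  simp only [mul_add, smul_add, mul_smul_comm, smul_smul]
  rcases sgn_cases Bs α with h | h <;> rw [h] <;> module

theorem uu_pos {α β : I} (hα : α ∈ Bs.S) (hβ : β ∈ Bs.S) : 0 < Bs.jdeg β + Bs.jdeg α :=
  add_pos ((mem_S Bs).1 hβ) ((mem_S Bs).1 hα)

theorem d1d4 : P.Br (d1 R) (d4 R) = C ((1 / 2 : ℂ) • ∑ α ∈ Bs.S, ∑ β ∈ Bs.S,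
    Bs.sgn β • (R.φd (Bs.udual α) * (R.φd (Bs.udual β) * R.ι (D.lie (Bs.u β) (Bs.u α))))) := by
  rw [der4 R (hd1 R) (q := fun _ => 0) (fun γ _ => d1X R γ)
    (fun α hα β hβ => d1Y R (sgn_mul_cases α β) (sig_uu α β) (uu_pos hα hβ) (wt_uu α β))]
  simp

theorem d2d4 : P.Br (d2 R) (d4 R) = C 0 := by
  rw [der4 R (hd2 R) (q := fun _ => 0) (r := fun _ _ => 0) (fun γ _ => d2X R γ)
    (fun α hα β hβ => d2Y R (sgn_mul_cases α β) (sig_uu α β) (uu_pos hα hβ) (wt_uu α β)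
      (by have := half_le Bs hα; have := half_le Bs hβ; intro h; linarith))]
  simp

theorem d3d4 : P.Br (d3 R) (d4 R) = C ((1 / 2 : ℂ) • ∑ α ∈ Bs.S, ∑ β ∈ Bs.S,
    (Bs.sgn α * D.form (D.lie (Bs.u β) (Bs.u α)) D.f) •
      (R.φd (Bs.udual α) * R.φd (Bs.udual β))) := by
  rw [der4 R (hd3 R) (q := fun _ => 0) (fun γ _ => d3X R γ)
    (fun α hα β hβ => d3Y R (sgn_mul_cases α β) (sig_uu α β) (uu_pos hα hβ) (wt_uu α β))]
  congr 2
  refine Finset.sum_congr rfl fun α _ => Finset.sum_congr rfl fun β _ => ?_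
  rw [Algebra.algebraMap_eq_smul_one]
  simp only [zero_mul, mul_zero, smul_zero, sub_zero, zero_add, mul_smul_comm, mul_one, smul_smul]
  congr 1
  linear_combination Bs.sgn α * D.form (D.lie (Bs.u β) (Bs.u α)) D.f * sgn_sq Bs β

theorem d1d1 : P.Br (d1 R) (d1 R) = C (∑ β ∈ Bs.S, ∑ α ∈ Bs.S,
    (Bs.sgn α * kap (Bs.sgn α) (Bs.sgn β)) •
      (R.φd (Bs.udual β) * (R.φd (Bs.udual α) * R.ι (D.lie (Bs.u β) (Bs.u α))))) := by
  have h1 : ∀ β ∈ Bs.S, P.Br (d1 R) (R.ι (Bs.u β)) = C (∑ α ∈ Bs.S,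
      (Bs.sgn α * kap (Bs.sgn α) (Bs.sgn β)) • (-(R.φd (Bs.udual α) *
        R.ι (D.lie (Bs.u β) (Bs.u α))))) := by
    intro β hβ
    have h2 : ∀ α ∈ Bs.S, P.Br (R.ι (Bs.u β)) (Bs.sgn α • (R.φd (Bs.udual α) * R.ι (Bs.u α))) =
        C (Bs.sgn α • (kap (Bs.sgn β) (-Bs.sgn α) • (R.φd (Bs.udual α) *
          R.ι (D.lie (Bs.u β) (Bs.u α))) + 0 * R.ι (Bs.u α))) := by
      intro α hα
      refine br_smul _ (leibC (hU R β) (hX R α) (by rw [R.br_curφd, map_zero]) ?_)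
      rw [R.br_cur, form_wt D (Bs.hu β) (Bs.hu α) (uu_pos hα hβ).ne']
      simp
    rw [skewC (hd1 R) (hU R β) (br_sum h2), kap_neg1, Finset.smul_sum]
    congr 1
    refine Finset.sum_congr rfl fun α _ => ?_
    rcases sgn_cases Bs α with h1 | h1 <;> rcases sgn_cases Bs β with h2 | h2 <;>
      rw [h1, h2] <;> norm_num [kap]
  refine (br_sum fun β hβ => br_smul _ (leibC (hd1 R) (hX R β) (d1X R β) (h1 β hβ))).trans ?_
  congr 1
  refine Finset.sum_congr rfl fun β _ => ?_
  rw [zero_mul, add_zero, kap_neg1, Finset.mul_sum, smul_smul, Finset.smul_sum]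
  refine Finset.sum_congr rfl fun α _ => ?_
  rw [mul_neg, sgn_sq]
  simp only [smul_neg, mul_smul_comm, mul_neg, neg_smul, one_smul, neg_neg]

theorem d2d2 : P.Br (d2 R) (d2 R) = C (∑ β ∈ Bs.Shalf, ∑ α ∈ Bs.Shalf,
    (-Bs.sgn β * D.form (D.lie (Bs.u α) (Bs.u β)) D.f) •
      (R.φd (Bs.udual β) * R.φd (Bs.udual α))) := by
  have h1 : ∀ β ∈ Bs.Shalf, P.Br (d2 R) (R.Φn (Bs.u β)) = C (∑ α ∈ Bs.Shalf,
      (D.form (D.lie (Bs.u α) (Bs.u β)) D.f) • (R.φd (Bs.udual α))) := by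
    intro β hβ
    have h2 : ∀ α ∈ Bs.Shalf, P.Br (R.Φn (Bs.u β)) (R.φd (Bs.udual α) * R.Φn (Bs.u α)) =
        C ((kap (Bs.sgn β) (-Bs.sgn α) • (R.φd (Bs.udual α) *
          algebraMap ℂ A (D.form D.f (D.lie (Bs.u β) (Bs.u α)))) + 0 * R.Φn (Bs.u α))) := by
      intro α hα
      refine (leibC (hN R β) (hX R α) (skew0 (hN R β) (hX R α) (R.br_φdΦ _ _)) ?_)
      apply R.br_ΦΦ
      · rw [← (mem_Shalf Bs).1 hβ]; exact Bs.hu β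
      · rw [← (mem_Shalf Bs).1 hα]; exact Bs.hu α
    rw [skewC (hd2 R) (hN R β) (br_sum h2), kap_neg1, Finset.smul_sum]
    congr 1
    refine Finset.sum_congr rfl fun α _ => ?_
    have hf := D.form_super (D.lie (Bs.u α) (Bs.u β)) D.f
    rw [sig_uu, D.f_even] at hf
    simp only [map_smul, LinearMap.smul_apply, smul_eq_mul] at hf
    rw [form_f_symm, lie_skew_kap D (sgn_cases Bs β) (sgn_cases Bs α) (sig_u Bs β) (sig_u Bs α),
      Algebra.algebraMap_eq_smul_one]
    simp only [map_smul, LinearMap.smul_apply, smul_eq_mul, zero_mul, add_zero, mul_smul_comm,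
      mul_one, smul_smul]
    congr 1
    rcases sgn_cases Bs α with h1 | h1 <;> rcases sgn_cases Bs β with h2 | h2 <;>
      rw [h1, h2] at hf <;> rw [h1, h2] <;> norm_num [kap] at hf ⊢ <;> linear_combination hf
  refine (br_sum fun β hβ => leibC (hd2 R) (hX R β) (d2X R β) (h1 β hβ)).trans ?_
  congr 1
  refine Finset.sum_congr rfl fun β _ => ?_
  rw [zero_mul, add_zero, kap_neg1, Finset.mul_sum, Finset.smul_sum]
  refine Finset.sum_congr rfl fun α _ => ?_
  simp only [mul_smul_comm, smul_smul]

theorem e11 : P.Br (d1 R) (d1 R) + (P.Br (d1 R) (d4 R) + P.Br (d1 R) (d4 R)) = 0 := by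
  rw [d1d1, d1d4, ← map_add, ← map_add, ← add_smul]
  rw [show (1 / 2 + 1 / 2 : ℂ) = 1 by norm_num, one_smul, ← Finset.sum_add_distrib,
    ← Polynomial.C_0]
  congr 1
  refine Finset.sum_eq_zero fun α _ => ?_
  rw [← Finset.sum_add_distrib]
  refine Finset.sum_eq_zero fun β _ => ?_
  rw [lie_skew_kap D (sgn_cases Bs α) (sgn_cases Bs β) (sig_u Bs α) (sig_u Bs β)]
  simp only [map_smul, mul_smul_comm, smul_smul]
  rw [← add_smul]
  convert zero_smul ℂ _ using 2
  rcases sgn_cases Bs α with h1 | h1 <;> rcases sgn_cases Bs β with h2 | h2 <;>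
      rw [h1, h2] <;> norm_num [kap]

theorem e22 : P.Br (d2 R) (d2 R) + (P.Br (d3 R) (d4 R) + P.Br (d3 R) (d4 R)) = 0 := by
  have hsub : Bs.Shalf ⊆ Bs.S := fun α hα => by
    rw [mem_S, (mem_Shalf Bs).1 hα]
    norm_num
  have hz : ∀ α ∈ Bs.S, ∀ β ∈ Bs.S, (α ∉ Bs.Shalf ∨ β ∉ Bs.Shalf) →
      D.form (D.lie (Bs.u β) (Bs.u α)) D.f = 0 := by
    intro α hα β hβ h
    apply form_wt D (wt_uu α β) f_wt
    intro h2
    have h3 := half_le Bs hα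
    have h4 := half_le Bs hβ
    rw [mem_Shalf, mem_Shalf] at h
    rcases h with h | h <;> apply h <;> linarith
  have key : ∑ α ∈ Bs.S, ∑ β ∈ Bs.S, (Bs.sgn α * D.form (D.lie (Bs.u β) (Bs.u α)) D.f) •
      (R.φd (Bs.udual α) * R.φd (Bs.udual β)) =
      ∑ α ∈ Bs.Shalf, ∑ β ∈ Bs.Shalf, (Bs.sgn α * D.form (D.lie (Bs.u β) (Bs.u α)) D.f) •
      (R.φd (Bs.udual α) * R.φd (Bs.udual β)) := by
    symm
    rw [← Finset.sum_subset hsub]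
    · refine Finset.sum_congr rfl fun α hα => Finset.sum_subset hsub ?_
      intro β hβ hβ'
      rw [hz α (hsub hα) β hβ (Or.inr hβ'), mul_zero, zero_smul]
    · intro α hα hα'
      refine Finset.sum_eq_zero fun β hβ => ?_
      rw [hz α hα β hβ (Or.inl hα'), mul_zero, zero_smul]
  rw [d2d2, d3d4, key, ← map_add, ← map_add, ← add_smul]
  norm_num

theorem sum4 {J : Type} (T : Finset J) (H : J → J → J → J → A) :
    ∑ a ∈ T, ∑ b ∈ T, ∑ m ∈ T, ∑ n ∈ T, H a b m n =
      ∑ m ∈ T, ∑ n ∈ T, ∑ b ∈ T, ∑ a ∈ T, H a b m n := by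
  calc _ = ∑ a ∈ T, ∑ m ∈ T, ∑ n ∈ T, ∑ b ∈ T, H a b m n := by
        refine Finset.sum_congr rfl fun a _ => ?_
        rw [Finset.sum_comm]
        exact Finset.sum_congr rfl fun m _ => Finset.sum_comm
    _ = _ := by
        rw [Finset.sum_comm]
        refine Finset.sum_congr rfl fun m _ => ?_
        rw [Finset.sum_comm]
        exact Finset.sum_congr rfl fun n _ => Finset.sum_comm

theorem e44 : P.Br (d4 R) (d4 R) = 0 := by
  set X : I → A := fun α => R.φd (Bs.udual α) with hXdef
  set s : I → ℂ := Bs.sgn with hsdef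
  set F : A := ∑ α ∈ Bs.S, ∑ β ∈ Bs.S, ∑ γ ∈ Bs.S, s β • (X α * (X β * (X γ *
    R.φc (D.lie (Bs.u γ) (D.lie (Bs.u β) (Bs.u α)))))) with hFdef
  set G : A := ∑ α ∈ Bs.S, ∑ β ∈ Bs.S, ∑ γ ∈ Bs.S, s β • (X α * (X β * (X γ *
    R.φc (D.lie (D.lie (Bs.u γ) (Bs.u β)) (Bs.u α))))) with hGdef
  have hmain : P.Br (d4 R) (d4 R) = C ((3 / 4 : ℂ) • F - (1 / 4 : ℂ) • G) := by
    rw [der4 R (hd4 R) (fun γ hγ => d4X R hγ)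
      (fun α hα β hβ => d4Y R (sgn_mul_cases α β) (sig_uu α β) (uu_pos hα hβ) (wt_uu α β))]
    congr 1
    simp only [Finset.sum_add_distrib, Finset.sum_sub_distrib]
    have t1 : ∑ α ∈ Bs.S, ∑ β ∈ Bs.S, Bs.sgn α • (((1 / 2 : ℂ) • ∑ μ ∈ Bs.S, ∑ ν ∈ Bs.S,
        (Bs.sgn μ * D.form (D.lie (Bs.u ν) (Bs.u μ)) (Bs.udual α)) •
        (R.φd (Bs.udual μ) * R.φd (Bs.udual ν))) * (R.φd (Bs.udual β) *
          R.φc (D.lie (Bs.u β) (Bs.u α)))) = (1 / 2 : ℂ) • F := by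
      have hin : ∀ μ ∈ Bs.S, ∀ ν ∈ Bs.S, ∀ β ∈ Bs.S,
          ∑ α ∈ Bs.S, (Bs.sgn α * (Bs.sgn μ * D.form (D.lie (Bs.u ν) (Bs.u μ)) (Bs.udual α))) •
            (X μ * (X ν * (X β * R.φc (D.lie (Bs.u β) (Bs.u α))))) =
          s ν • (X μ * (X ν * (X β * R.φc (D.lie (Bs.u β) (D.lie (Bs.u ν) (Bs.u μ)))))) := by
        intro μ hμ ν hν β hβ
        have := expand Bs ((LinearMap.mulLeft ℂ (X μ)) ∘ₗ (LinearMap.mulLeft ℂ (X ν)) ∘ₗ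
          (LinearMap.mulLeft ℂ (X β)) ∘ₗ R.φc ∘ₗ (D.lie (Bs.u β))) Bs.S (wt_uu μ ν)
          (fun γ hγ => by rw [mem_S, hγ]; exact uu_pos hμ hν)
        simp only [LinearMap.comp_apply, LinearMap.mulLeft_apply] at this
        rw [← this, Finset.smul_sum]
        refine Finset.sum_congr rfl fun α _ => ?_
        rw [smul_smul]
        congr 1
        have hf := form_sgn Bs (sgn_mul_cases (Bs := Bs) μ ν) (sig_uu μ ν) α
        have h2 := sgn_sq Bs μ
        simp only [hsdef]
        linear_combination Bs.sgn μ * hf +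
          Bs.sgn ν * D.form (D.lie (Bs.u ν) (Bs.u μ)) (Bs.udual α) * h2
      rw [hFdef, ← Finset.sum_congr rfl fun μ hμ => Finset.sum_congr rfl fun ν hν =>
        Finset.sum_congr rfl fun β hβ => hin μ hμ ν hν β hβ]
      simp only [Finset.smul_sum, Finset.sum_mul, smul_mul_assoc, mul_assoc, smul_smul]
      rw [sum4]
      refine Finset.sum_congr rfl fun μ _ => Finset.sum_congr rfl fun ν _ =>
        Finset.sum_congr rfl fun β _ => Finset.sum_congr rfl fun α _ => ?_
      simp only [hXdef]
      congr 1
      ring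
    have t2 : ∑ α ∈ Bs.S, ∑ β ∈ Bs.S, R.φd (Bs.udual α) * (((1 / 2 : ℂ) •
        ∑ μ ∈ Bs.S, ∑ ν ∈ Bs.S,
        (Bs.sgn μ * D.form (D.lie (Bs.u ν) (Bs.u μ)) (Bs.udual β)) •
        (R.φd (Bs.udual μ) * R.φd (Bs.udual ν))) *
          R.φc (D.lie (Bs.u β) (Bs.u α))) = (1 / 2 : ℂ) • G := by
      have hin : ∀ α ∈ Bs.S, ∀ μ ∈ Bs.S, ∀ ν ∈ Bs.S,
          ∑ β ∈ Bs.S, (Bs.sgn μ * D.form (D.lie (Bs.u ν) (Bs.u μ)) (Bs.udual β)) •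
            (X α * (X μ * (X ν * R.φc (D.lie (Bs.u β) (Bs.u α))))) =
          s μ • (X α * (X μ * (X ν * R.φc (D.lie (D.lie (Bs.u ν) (Bs.u μ)) (Bs.u α))))) := by
        intro α hα μ hμ ν hν
        have := expand Bs ((LinearMap.mulLeft ℂ (X α)) ∘ₗ (LinearMap.mulLeft ℂ (X μ)) ∘ₗ
          (LinearMap.mulLeft ℂ (X ν)) ∘ₗ R.φc ∘ₗ (D.lie.flip (Bs.u α))) Bs.S (wt_uu μ ν)
          (fun γ hγ => by rw [mem_S, hγ]; exact uu_pos hμ hν)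
        simp only [LinearMap.comp_apply, LinearMap.mulLeft_apply, LinearMap.flip_apply] at this
        rw [← this, Finset.smul_sum]
        refine Finset.sum_congr rfl fun β _ => ?_
        rw [smul_smul]
      rw [hGdef, ← Finset.sum_congr rfl fun α hα => Finset.sum_congr rfl fun μ hμ =>
        Finset.sum_congr rfl fun ν hν => hin α hα μ hμ ν hν]
      simp only [Finset.smul_sum, Finset.sum_mul, Finset.mul_sum, smul_mul_assoc,
        mul_smul_comm, mul_assoc, smul_smul]
      refine Finset.sum_congr rfl fun α _ => ?_
      rw [Finset.sum_comm]
      refine Finset.sum_congr rfl fun μ _ => ?_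
      rw [Finset.sum_comm]
    have t3 : ∑ α ∈ Bs.S, ∑ β ∈ Bs.S, Bs.sgn β • (R.φd (Bs.udual α) * (R.φd (Bs.udual β) *
        ∑ γ ∈ Bs.S, R.φd (Bs.udual γ) * R.φc (D.lie (Bs.u γ) (D.lie (Bs.u β) (Bs.u α))))) =
        F := by
      simp only [hFdef, Finset.mul_sum, Finset.smul_sum, hXdef, hsdef]
    rw [t1, t2, t3]
    module
  have hJ : F = G - F := by
    have h1 : F = G + ∑ α ∈ Bs.S, ∑ β ∈ Bs.S, ∑ γ ∈ Bs.S, (s β * kap (s γ) (s β)) •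
        (X α * (X β * (X γ * R.φc (D.lie (Bs.u β) (D.lie (Bs.u γ) (Bs.u α)))))) := by
      simp only [hFdef, hGdef, ← Finset.sum_add_distrib]
      refine Finset.sum_congr rfl fun α _ => Finset.sum_congr rfl fun β _ =>
        Finset.sum_congr rfl fun γ _ => ?_
      rw [jacobi_kap D (sgn_cases Bs γ) (sgn_cases Bs β) (sig_u Bs γ) (sig_u Bs β)]
      simp only [map_add, map_smul, mul_add, mul_smul_comm, smul_add, smul_smul, hsdef]
    have h2 : ∑ α ∈ Bs.S, ∑ β ∈ Bs.S, ∑ γ ∈ Bs.S, (s β * kap (s γ) (s β)) •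
        (X α * (X β * (X γ * R.φc (D.lie (Bs.u β) (D.lie (Bs.u γ) (Bs.u α)))))) = -F := by
      simp only [hFdef, ← Finset.sum_neg_distrib]
      refine Finset.sum_congr rfl fun α _ => ?_
      rw [Finset.sum_comm]
      refine Finset.sum_congr rfl fun β _ => Finset.sum_congr rfl fun γ _ => ?_
      rw [← mul_assoc (X γ) (X β), comm_kap (hX R γ) (hX R β), ← neg_smul]
      simp only [smul_mul_assoc, mul_smul_comm, smul_smul, mul_assoc]
      congr 1
      simp only [hsdef]
      rcases sgn_cases Bs γ with h1 | h1 <;> rcases sgn_cases Bs β with h2 | h2 <;>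
        rw [h1, h2] <;> norm_num [kap]
    rw [h2] at h1
    rw [sub_eq_add_neg]
    exact h1
  have hC : G = -F := by
    have h0 : F = ∑ α ∈ Bs.S, ∑ β ∈ Bs.S, ∑ γ ∈ Bs.S, s γ • (X β * (X γ * (X α *
        R.φc (D.lie (Bs.u α) (D.lie (Bs.u γ) (Bs.u β)))))) := by
      rw [hFdef]
      calc _ = ∑ β ∈ Bs.S, ∑ α ∈ Bs.S, ∑ γ ∈ Bs.S, s γ • (X β * (X γ * (X α *
            R.φc (D.lie (Bs.u α) (D.lie (Bs.u γ) (Bs.u β)))))) := by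
            refine Finset.sum_congr rfl fun β _ => ?_
            rw [Finset.sum_comm]
        _ = _ := Finset.sum_comm
    rw [h0]
    simp only [hGdef, ← Finset.sum_neg_distrib]
    refine Finset.sum_congr rfl fun α _ => Finset.sum_congr rfl fun β _ =>
      Finset.sum_congr rfl fun γ _ => ?_
    have hc : X α * (X β * X γ) = kap (-s α) (-s β * -s γ) • (X β * X γ * X α) :=
      comm_kap (hX R α) ((hX R β).mul (hX R γ))
    rw [← mul_assoc (X β) (X γ), ← mul_assoc (X α), hc,
      lie_skew_kap D (sgn_mul_cases (Bs := Bs) β γ) (sgn_cases Bs α) (sig_uu β γ) (sig_u Bs α),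
      ← neg_smul]
    simp only [map_smul, smul_mul_assoc, mul_smul_comm, smul_smul, mul_assoc]
    congr 1
    simp only [hsdef]
    rcases sgn_cases Bs γ with h1 | h1 <;> rcases sgn_cases Bs β with h2 | h2 <;>
      rcases sgn_cases Bs α with h3 | h3 <;> rw [h1, h2, h3] <;> norm_num [kap]
  have hF0 : F = 0 := by
    rw [hC] at hJ
    have h3 : (3 : ℂ) • F = 0 := by
      calc (3 : ℂ) • F = F + (2 : ℂ) • F := by module
        _ = (-F - F) + (2 : ℂ) • F := by rw [← hJ]
        _ = 0 := by module
    simpa using h3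
  rw [hmain, hC, hF0]
  simp

theorem br_symm {a b z : A} (ha : Hm P a (-1)) (hb : Hm P b (-1)) (h : P.Br a b = C z) :
    P.Br b a = P.Br a b := by
  rw [skewC hb ha h, h, kap_neg1]
  simp

theorem d1d2 : P.Br (d1 R) (d2 R) = C 0 := by
  have h1 : ∀ β, P.Br (d1 R) (R.Φn (Bs.u β)) = C 0 := by
    intro β
    have h2 : ∀ α ∈ Bs.S, P.Br (R.Φn (Bs.u β)) (Bs.sgn α • (R.φd (Bs.udual α) * R.ι (Bs.u α))) =
        C 0 := by
      intro α _
      rw [br_smul _ (leibC (hN R β) (hX R α) (skew0 (hN R β) (hX R α) (R.br_φdΦ _ _))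
        (skew0 (hN R β) (hU R α) (R.br_curΦ _ _)))]
      simp
    have h3 := br_sum h2
    rw [skewC (hd1 R) (hN R β) h3]
    simp
  have h : ∀ β ∈ Bs.Shalf, P.Br (d1 R) (R.φd (Bs.udual β) * R.Φn (Bs.u β)) = C 0 := by
    intro β _
    rw [leibC (hd1 R) (hX R β) (d1X R β) (h1 β)]
    simp
  have h2 := br_sum h
  rw [d2, h2]
  simp

theorem d3d1 : P.Br (d3 R) (d1 R) = C 0 := by
  have h : ∀ β ∈ Bs.S, P.Br (d3 R) (Bs.sgn β • (R.φd (Bs.udual β) * R.ι (Bs.u β))) = C 0 := by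
    intro β _
    rw [br_smul _ (leibC (hd3 R) (hX R β) (d3X R β)
      (skew0 (hd3 R) (hU R β) (R.br_curφd _ _)))]
    simp
  have h2 := br_sum h
  rw [d1, h2]
  simp

theorem d3d2 : P.Br (d3 R) (d2 R) = C 0 := by
  have h : ∀ β ∈ Bs.Shalf, P.Br (d3 R) (R.φd (Bs.udual β) * R.Φn (Bs.u β)) = C 0 := by
    intro β _
    rw [leibC (hd3 R) (hX R β) (d3X R β) (w := 0) (by rw [d3, R.br_φdΦ, map_zero])]
    simp
  have h2 := br_sum h
  rw [d2, h2]
  simp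

theorem d3d3 : P.Br (d3 R) (d3 R) = 0 := R.br_φdφd _ _

end BRSTLevel

end BRSTAux

/-- The element
`d = ∑_{α∈S} (-1)^{p(α)} φ^α u_α + ∑_{α∈S(1/2)} φ^α Φ_α + φ^f
  + (1/2) ∑_{α,β∈S} (-1)^{p(α)} φ^α φ^β φ_{[u_β,u_α]}`
of the Poisson vertex algebra `S(R)` has odd parity and satisfies `{d_λ d} = 0`. -/
theorem statement0
    (g : Type) [AddCommGroup g] [Module ℂ g] (D : SuperSetup g)
    (I : Type) [Fintype I] [DecidableEq I] (Bs : BasisData D I)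
    (A : Type) [Ring A] [Algebra ℂ A] (P : PVA A) (k : ℂ)
    (R : BRST D Bs P k) :
    P.σ R.dd = - R.dd ∧ P.Br R.dd R.dd = 0 := by
  refine ⟨?_, ?_⟩
  · have h := ((((BRSTAux.hd1 R).add (BRSTAux.hd2 R)).add (BRSTAux.hd3 R)).add
      (BRSTAux.hd4 R)).2
    rw [BRSTAux.dd_eq, h, neg_smul, one_smul]
  · have s12 := BRSTAux.br_symm (BRSTAux.hd1 R) (BRSTAux.hd2 R) (BRSTAux.d1d2 R)
    have s31 := BRSTAux.br_symm (BRSTAux.hd3 R) (BRSTAux.hd1 R) (BRSTAux.d3d1 R)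
    have s32 := BRSTAux.br_symm (BRSTAux.hd3 R) (BRSTAux.hd2 R) (BRSTAux.d3d2 R)
    have s14 := BRSTAux.br_symm (BRSTAux.hd1 R) (BRSTAux.hd4 R) (BRSTAux.d1d4 R)
    have s24 := BRSTAux.br_symm (BRSTAux.hd2 R) (BRSTAux.hd4 R) (BRSTAux.d2d4 R)
    have s34 := BRSTAux.br_symm (BRSTAux.hd3 R) (BRSTAux.hd4 R) (BRSTAux.d3d4 R)
    have e11 := BRSTAux.e11 R
    have e22 := BRSTAux.e22 R
    rw [BRSTAux.dd_eq]
    simp only [map_add, LinearMap.add_apply]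
    rw [s12, s31, s32, s14, s24, s34, BRSTAux.d1d2, BRSTAux.d3d1, BRSTAux.d3d2, BRSTAux.d2d4,
      BRSTAux.e44, BRSTAux.d3d3]
    simp only [map_zero, add_zero, zero_add]
    rw [← add_zero (0 : Polynomial A)]
    nth_rewrite 1 [← e11]
    rw [← e22]
    abel
end
end

section
/- For a in g let J_a = a + \sum_{\alpha\in S}\phi^\alpha\phi_{[u_\alpha,a]} and K_a = J_{\pi_{\leq}a} - (-1)^{p(a)}\Phi_a - (a|f), where \pi_{\leq} is the projection of g onto \bigoplus_{i\leq 0}g(i). Then d_{(0)}(J_a) = \sum_{\alpha\in S}(-1)^{p(\alpha)}\phi^\alpha K_{[u_\alpha,a]} + \sum_{\alpha\in S} k(-1)^{p(\alpha)}(u_\alpha|a)\,\partial\phi^\alpha. -/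
open Polynomial

noncomputable section

/-! ### Signs -/

/-- The sign attached to a parity. -/
def sgB (p : Bool) : ℂ := if p then -1 else 1
/-- The Koszul sign. -/
def kap (p q : Bool) : ℂ := if p && q then -1 else 1

namespace PVA
variable {A : Type} [Ring A] [Algebra ℂ A] (P : PVA A)

lemma comm_s {a b : A} {p q : Bool} (ha : P.σ a = sgB p • a) (hb : P.σ b = sgB q • b) :
    a * b = kap p q • (b * a) := by
  cases p <;> cases q <;> simp [sgB, kap] at *
  · exact P.supercomm a b (Or.inl ha)
  · exact P.supercomm a b (Or.inl ha)
  · exact P.supercomm a b (Or.inr hb)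
  · exact P.supercomm_odd a b ha hb

lemma leib_s {a b : A} (c : A) {p q : Bool} (ha : P.σ a = sgB p • a) (hb : P.σ b = sgB q • b) :
    P.Br a (b * c) = kap p q • (Polynomial.C b * P.Br a c) + P.Br a b * Polynomial.C c := by
  cases p <;> cases q <;> simp [sgB, kap] at *
  · exact P.leibniz a b c (Or.inl ha)
  · exact P.leibniz a b c (Or.inl ha)
  · exact P.leibniz a b c (Or.inr hb)
  · exact P.leibniz_odd a b c ha hb

lemma skew_s {a b : A} {p q : Bool} (ha : P.σ a = sgB p • a) (hb : P.σ b = sgB q • b) :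
    P.Br a b = - kap p q • oppSubst P.δ (P.Br b a) := by
  cases p <;> cases q <;> simp [sgB, kap] at *
  · exact P.skew a b (Or.inl ha)
  · exact P.skew a b (Or.inl ha)
  · exact P.skew a b (Or.inr hb)
  · exact P.skew_odd a b ha hb

lemma opp_C (u : A) : oppSubst P.δ (Polynomial.C u) = Polynomial.C u := by
  unfold oppSubst
  rw [Polynomial.sum_C_index]
  · simp
  · simp

lemma opp_C_mon (u v : A) :
    (oppSubst P.δ (Polynomial.C u + Polynomial.monomial 1 v)).coeff 0 = u - P.δ v := by
  unfold oppSubst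
  rw [Polynomial.sum_add_index]
  · rw [Polynomial.sum_C_index, Polynomial.sum_monomial_index]
    · simp [Finset.sum_range_succ, Polynomial.coeff_monomial, sub_eq_add_neg]
    · simp
    · simp
  · simp
  · intro n b c
    simp [Finset.sum_add_distrib]

lemma skew0 {d b u v : A} {q : Bool} (hd : P.σ d = - d) (hb : P.σ b = sgB q • b)
    (h : P.Br b d = Polynomial.C u + Polynomial.monomial 1 v) :
    (P.Br d b).coeff 0 = - sgB q • (u - P.δ v) := by
  have hd' : P.σ d = sgB true • d := by simpa [sgB] using hd
  rw [P.skew_s hd' hb, h, Polynomial.coeff_smul, P.opp_C_mon]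
  cases q <;> simp [kap, sgB]

lemma skewC {d b u : A} {q : Bool} (hd : P.σ d = - d) (hb : P.σ b = sgB q • b)
    (h : P.Br b d = Polynomial.C u) :
    (P.Br d b).coeff 0 = - sgB q • u := by
  have := P.skew0 (v := 0) hd hb (by simpa using h)
  simpa using this

end PVA

namespace SuperSetup
variable {g : Type} [AddCommGroup g] [Module ℂ g] (D : SuperSetup g)

lemma lie_skew_s {a b : g} {p q : Bool} (ha : D.σg a = sgB p • a) (hb : D.σg b = sgB q • b) :
    D.lie a b = - kap p q • D.lie b a := by
  cases p <;> cases q <;> simp [sgB, kap] at *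
  · exact D.lie_skew a b (Or.inl ha)
  · exact D.lie_skew a b (Or.inl ha)
  · exact D.lie_skew a b (Or.inr hb)
  · exact D.lie_skew_odd a b ha hb

lemma jacobi_s {a b : g} (c : g) {p q : Bool} (ha : D.σg a = sgB p • a)
    (hb : D.σg b = sgB q • b) :
    D.lie (D.lie a b) c = D.lie a (D.lie b c) - kap p q • D.lie b (D.lie a c) := by
  cases p <;> cases q <;> simp [sgB, kap] at *
  · rw [D.jacobi a b c (Or.inl ha)]; abel
  · rw [D.jacobi a b c (Or.inl ha)]; abel
  · rw [D.jacobi a b c (Or.inr hb)]; abel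
  · rw [D.jacobi_odd a b c ha hb]; abel

lemma mem_gwt {i : ℚ} {a : g} : a ∈ D.gwt i ↔ D.lie D.x a = (i : ℂ) • a := by
  simp [gwt, sub_eq_zero]

lemma lie_gwt {i j : ℚ} {a b : g} (ha : a ∈ D.gwt i) (hb : b ∈ D.gwt j) :
    D.lie a b ∈ D.gwt (i + j) := by
  rw [mem_gwt] at *
  rw [D.jacobi _ _ _ (Or.inl D.x_even), ha, hb]
  simp [add_smul]

lemma form_x (a b : g) : D.form (D.lie D.x a) b = - D.form a (D.lie D.x b) := by
  rw [D.lie_skew _ _ (Or.inl D.x_even), map_neg, LinearMap.neg_apply, D.form_invariant]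

lemma form_gwt {i j : ℚ} {a b : g} (ha : a ∈ D.gwt i) (hb : b ∈ D.gwt j) (h : i + j ≠ 0) :
    D.form a b = 0 := by
  rw [mem_gwt] at *
  have h1 := D.form_x a b
  rw [ha, hb] at h1
  simp at h1
  have h2 : ((i : ℂ) + j) * D.form a b = 0 := by linear_combination h1
  rcases mul_eq_zero.1 h2 with h3 | h3
  · exact absurd (by exact_mod_cast h3) h
  · exact h3

lemma form_par {a b : g} {p q : Bool} (ha : D.σg a = sgB p • a) (hb : D.σg b = sgB q • b)
    (h : p ≠ q) : D.form a b = 0 := by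
  have h1 := D.form_super a b
  rw [ha, hb] at h1
  cases p <;> cases q <;> simp [sgB] at * <;> linear_combination (-1/2 : ℂ) * h1

lemma sgB_form {a b : g} {p q : Bool} (ha : D.σg a = sgB p • a) (hb : D.σg b = sgB q • b) :
    sgB p * D.form a b = sgB q * D.form a b := by
  by_cases h : p = q
  · rw [h]
  · rw [D.form_par ha hb h]; simp

lemma form_symm_s {i : ℚ} {a b : g} {p q : Bool} (hi : i ≠ 0) (hw : b ∈ D.gwt i)
    (ha : D.σg a = sgB p • a) (hb : D.σg b = sgB q • b) :
    D.form a b = kap p q * D.form b a := by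
  rw [mem_gwt] at hw
  have hi' : (i : ℂ) ≠ 0 := by exact_mod_cast hi
  apply mul_left_cancel₀ hi'
  have e1 : (i : ℂ) * D.form a b = - D.form D.x (D.lie a b) := by
    have := D.form_x a b
    rw [hw] at this
    rw [← D.form_invariant, this]
    simp
  have e2 : (i : ℂ) * D.form b a = D.form D.x (D.lie b a) := by
    rw [← D.form_invariant, hw]
    simp
  rw [e1, D.lie_skew_s ha hb]
  simp
  rw [← e2]; ring

lemma lie_par {a b : g} {p q : Bool} (ha : D.σg a = sgB p • a) (hb : D.σg b = sgB q • b) :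
    D.σg (D.lie a b) = sgB (xor p q) • D.lie a b := by
  rw [D.σg_lie, ha, hb]
  cases p <;> cases q <;> simp [sgB]

end SuperSetup

namespace BasisData
variable {g : Type} [AddCommGroup g] [Module ℂ g] {D : SuperSetup g}
  {I : Type} [Fintype I] [DecidableEq I] (Bs : BasisData D I)

/-- The projection onto the positive part. -/
def πp (a : g) : g := ∑ α ∈ Bs.S, D.form a (Bs.udual α) • Bs.u α

lemma pu (α : I) : D.σg (Bs.u α) = sgB (Bs.par α) • Bs.u α := Bs.hσu α
lemma pud (α : I) : D.σg (Bs.udual α) = sgB (Bs.par α) • Bs.udual α := Bs.hσud α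
lemma sgn_eq (α : I) : Bs.sgn α = sgB (Bs.par α) := rfl

lemma πle_add (a : g) : Bs.πle a + Bs.πp a = a := by
  conv_rhs => rw [← Bs.compl a]
  unfold πle πp S
  rw [← Finset.sum_filter_add_sum_filter_not Finset.univ (fun α => Bs.jdeg α ≤ 0)]
  simp only [not_le]

/-- A linear map killing the non-positive part only sees the positive part. -/
lemma sum_pos {M : Type} [AddCommGroup M] [Module ℂ M] (L : g →ₗ[ℂ] M)
    (hL : ∀ i : ℚ, i ≤ 0 → ∀ a ∈ D.gwt i, L a = 0) (a : g) :
    L (Bs.πp a) = L a := by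
  conv_rhs => rw [← Bs.πle_add a]
  rw [map_add]
  have : L (Bs.πle a) = 0 := by
    unfold πle
    rw [map_sum]
    refine Finset.sum_eq_zero fun α hα => ?_
    rw [map_smul, hL _ (Finset.mem_filter.1 hα).2 _ (Bs.hu α), smul_zero]
  rw [this, zero_add]

lemma πp_par {a : g} {p : Bool} (ha : D.σg a = sgB p • a) :
    D.σg (Bs.πp a) = sgB p • Bs.πp a := by
  unfold πp
  rw [map_sum, Finset.smul_sum]
  refine Finset.sum_congr rfl fun α _ => ?_
  rw [map_smul, Bs.pu, smul_smul, smul_smul, D.sgB_form ha (Bs.pud α), mul_comm]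

lemma πp_lie (α β : I) (hα : α ∈ Bs.S) (hβ : β ∈ Bs.S) :
    Bs.πp (D.lie (Bs.u β) (Bs.u α)) = D.lie (Bs.u β) (Bs.u α) := by
  conv_rhs => rw [← Bs.πle_add (D.lie (Bs.u β) (Bs.u α))]
  have : Bs.πle (D.lie (Bs.u β) (Bs.u α)) = 0 := by
    unfold πle
    refine Finset.sum_eq_zero fun γ hγ => ?_
    have h1 := (Finset.mem_filter.1 hγ).2
    have h2 := (Finset.mem_filter.1 hα).2
    have h3 := (Finset.mem_filter.1 hβ).2
    rw [D.form_gwt (D.lie_gwt (Bs.hu β) (Bs.hu α)) (Bs.hud γ) (by linarith), zero_smul]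
  rw [this, zero_add]

end BasisData

namespace BRST

variable {g : Type} [AddCommGroup g] [Module ℂ g] {D : SuperSetup g}
  {I : Type} [Fintype I] [DecidableEq I] {Bs : BasisData D I}
  {A : Type} [Ring A] [Algebra ℂ A] {P : PVA A} {k : ℂ} (R : BRST D Bs P k)

lemma pι {a : g} {p : Bool} (ha : D.σg a = sgB p • a) : P.σ (R.ι a) = sgB p • R.ι a := by
  rw [R.σι, ha, map_smul]
lemma pΦ {a : g} {p : Bool} (ha : D.σg a = sgB p • a) : P.σ (R.Φn a) = sgB p • R.Φn a := by
  rw [R.σΦ, ha, map_smul]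
lemma pφc {a : g} {p : Bool} (ha : D.σg a = sgB p • a) :
    P.σ (R.φc a) = sgB (!p) • R.φc a := by
  rw [R.σφc, ha, map_smul]; cases p <;> simp [sgB]
lemma pφd {a : g} {p : Bool} (ha : D.σg a = sgB p • a) :
    P.σ (R.φd a) = sgB (!p) • R.φd a := by
  rw [R.σφd, ha, map_smul]; cases p <;> simp [sgB]

lemma dd_odd : P.σ R.dd = - R.dd := by
  unfold dd
  simp only [map_add, map_sum, map_smul, map_mul, R.pι (Bs.pu _), R.pΦ (Bs.pu _),
    R.pφd (Bs.pud _), R.pφc (D.lie_par (Bs.pu _) (Bs.pu _)), neg_add]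
  refine congrArg₂ _ (congrArg₂ _ (congrArg₂ _ ?_ ?_) ?_) ?_
  · rw [← Finset.sum_neg_distrib]
    refine Finset.sum_congr rfl fun α _ => ?_
    cases Bs.par α <;> simp [sgB]
  · rw [← Finset.sum_neg_distrib]
    refine Finset.sum_congr rfl fun α _ => ?_
    cases Bs.par α <;> simp [sgB]
  · rw [R.σφd, D.f_even]
  · rw [← smul_neg, ← Finset.sum_neg_distrib]
    congr 1
    refine Finset.sum_congr rfl fun α _ => ?_
    rw [← Finset.sum_neg_distrib]
    refine Finset.sum_congr rfl fun β _ => ?_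
    cases Bs.par α <;> cases Bs.par β <;> simp [sgB]

lemma d0_apply (a : A) : R.d0 a = (P.Br R.dd a).coeff 0 := rfl

lemma d0_ι {a : g} {p : Bool} (ha : D.σg a = sgB p • a) :
    R.d0 (R.ι a) = (∑ α ∈ Bs.S, Bs.sgn α • (R.φd (Bs.udual α) * R.ι (D.lie (Bs.u α) a)))
      + ∑ α ∈ Bs.S, (k * Bs.sgn α * D.form (Bs.u α) a) • P.δ (R.φd (Bs.udual α)) := by
  have h : P.Br (R.ι a) R.dd =
      Polynomial.C (- sgB p • ∑ α ∈ Bs.S, Bs.sgn α • (R.φd (Bs.udual α) * R.ι (D.lie (Bs.u α) a)))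
      + Polynomial.monomial 1
        (sgB p • ∑ α ∈ Bs.S, (k * Bs.sgn α * D.form (Bs.u α) a) • R.φd (Bs.udual α)) := by
    unfold dd
    simp only [map_add, map_sum, map_smul, P.leib_s _ (R.pι ha) (R.pφd (Bs.pud _)),
      R.br_curφc, R.br_curφd, R.br_curΦ, R.br_cur]
    simp only [mul_zero, zero_mul, smul_zero, add_zero, Finset.sum_const_zero]
    simp only [Finset.smul_sum, map_sum]
    rw [← Finset.sum_add_distrib]
    refine Finset.sum_congr rfl fun α hα => ?_
    have hj : Bs.jdeg α ≠ 0 := ne_of_gt (Finset.mem_filter.1 hα).2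
    rw [D.lie_skew_s ha (Bs.pu α), D.form_symm_s hj (Bs.hu α) ha (Bs.pu α), Bs.sgn_eq]
    rw [mul_add, Polynomial.C_mul_monomial, ← Algebra.commutes, ← Algebra.smul_def]
    ext n
    rcases n with _ | _ | n
    · simp [Polynomial.coeff_monomial, Polynomial.coeff_C]
      cases p <;> cases Bs.par α <;> simp [sgB, kap]
    · simp [Polynomial.coeff_monomial, Polynomial.coeff_C]
      cases p <;> cases Bs.par α <;> simp [sgB, kap]
    · simp [Polynomial.coeff_monomial, Polynomial.coeff_C]
  rw [d0_apply, P.skew0 R.dd_odd (R.pι ha) h]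
  simp only [map_smul, map_sum]
  cases p <;> simp [sgB] <;> abel

lemma br_φc_φd (b : g) {γ : I} (hγ : γ ∈ Bs.S) :
    P.Br (R.φc b) (R.φd (Bs.udual γ)) =
      Polynomial.C (algebraMap ℂ A (D.form b (Bs.udual γ))) := by
  have hγ' := (Finset.mem_filter.1 hγ).2
  rw [← Bs.sum_pos R.φc R.φc_proj b]
  have e : D.form b (Bs.udual γ) = D.form (Bs.πp b) (Bs.udual γ) := by
    refine (Bs.sum_pos (D.form.flip (Bs.udual γ)) ?_ b).symm
    intro i hi c hc
    exact D.form_gwt hc (Bs.hud γ) (by linarith)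
  rw [e]
  unfold BasisData.πp
  simp only [map_sum, map_smul, LinearMap.sum_apply, LinearMap.smul_apply]
  refine Finset.sum_congr rfl fun α hα => ?_
  rw [R.br_φφd _ _ (Finset.mem_filter.1 hα).2 (by linarith) _ (Bs.hu α) _ (Bs.hud γ)]
  simp [Algebra.smul_def, Polynomial.smul_C]

lemma f_gwt : D.f ∈ D.gwt (-1) := by
  rw [D.mem_gwt, D.lie_xf]; simp

lemma br_φc_f (b : g) :
    P.Br (R.φc b) (R.φd D.f) = Polynomial.C (algebraMap ℂ A (D.form b D.f)) := by
  rw [← Bs.sum_pos R.φc R.φc_proj b]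
  have e : D.form b D.f = D.form (Bs.πp b) D.f := by
    refine (Bs.sum_pos (D.form.flip D.f) ?_ b).symm
    intro i hi c hc
    exact D.form_gwt hc f_gwt (by linarith)
  rw [e]
  unfold BasisData.πp
  simp only [map_sum, map_smul, LinearMap.sum_apply, LinearMap.smul_apply]
  refine Finset.sum_congr rfl fun α hα => ?_
  rw [R.br_φφd _ _ (Finset.mem_filter.1 hα).2 (by norm_num) _ (Bs.hu α) _ f_gwt]
  simp [Algebra.smul_def, Polynomial.smul_C]

lemma Φ_sum (b : g) :
    ∑ α ∈ Bs.Shalf, D.form b (Bs.udual α) • R.Φn (Bs.u α) = R.Φn b := by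
  conv_rhs => rw [← Bs.compl b, map_sum]
  unfold BasisData.Shalf
  rw [Finset.sum_filter]
  refine Finset.sum_congr rfl fun α _ => ?_
  split_ifs with h
  · rw [map_smul]
  · rw [map_smul, R.Φn_proj _ h _ (Bs.hu α), smul_zero]

lemma Shalf_sub {α : I} (h : α ∈ Bs.Shalf) : α ∈ Bs.S := by
  have := (Finset.mem_filter.1 h).2
  refine Finset.mem_filter.2 ⟨Finset.mem_univ _, ?_⟩
  rw [this]; norm_num

lemma Jel_add (a b : g) : R.Jel (a + b) = R.Jel a + R.Jel b := by
  simp only [Jel, map_add, mul_add, Finset.sum_add_distrib]; abel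

lemma br_φc_dd {b : g} {p : Bool} (hb : D.σg b = sgB p • b) :
    P.Br (R.φc b) R.dd =
      Polynomial.C (sgB p • R.Jel (Bs.πp b) + R.Φn b + algebraMap ℂ A (D.form b D.f)) := by
  have hι : ∀ c, P.Br (R.φc b) (R.ι c) = 0 := by
    intro c
    have hc0 : ∀ α, P.Br (R.φc b) (R.ι (Bs.u α)) = 0 := by
      intro α
      rw [P.skew_s (R.pφc hb) (R.pι (Bs.pu α)), R.br_curφc]
      simp [oppSubst]
    rw [← Bs.compl c]
    simp [hc0]
  have h1 : P.Br (R.φc b) (∑ α ∈ Bs.S, Bs.sgn α • (R.φd (Bs.udual α) * R.ι (Bs.u α)))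
      = Polynomial.C (sgB p • R.ι (Bs.πp b)) := by
    unfold BasisData.πp
    simp only [map_sum, map_smul, Finset.smul_sum]
    refine Finset.sum_congr rfl fun α hα => ?_
    rw [P.leib_s _ (R.pφc hb) (R.pφd (Bs.pud _)), hι, R.br_φc_φd b hα]
    rw [smul_smul, D.sgB_form hb (Bs.pud α), Bs.sgn_eq, ← Polynomial.C_mul, ← Algebra.smul_def]
    simp [Polynomial.smul_C, smul_smul]
  have h2 : P.Br (R.φc b) (∑ α ∈ Bs.Shalf, R.φd (Bs.udual α) * R.Φn (Bs.u α))
      = Polynomial.C (R.Φn b) := by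
    rw [← R.Φ_sum b]
    simp only [map_sum]
    refine Finset.sum_congr rfl fun α hα => ?_
    rw [P.leib_s _ (R.pφc hb) (R.pφd (Bs.pud _)), R.br_φcΦ, R.br_φc_φd b (Shalf_sub hα)]
    rw [← Polynomial.C_mul, ← Algebra.smul_def]
    simp
  have h4 : P.Br (R.φc b) (∑ α ∈ Bs.S, ∑ β ∈ Bs.S,
        Bs.sgn α • (R.φd (Bs.udual α) * (R.φd (Bs.udual β) * R.φc (D.lie (Bs.u β) (Bs.u α)))))
      = Polynomial.C ((2 * sgB p) •
        ∑ α ∈ Bs.S, R.φd (Bs.udual α) * R.φc (D.lie (Bs.u α) (Bs.πp b))) := by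
    have e1 : ∀ α ∈ Bs.S, ∀ β ∈ Bs.S, P.Br (R.φc b)
        (Bs.sgn α • (R.φd (Bs.udual α) * (R.φd (Bs.udual β) * R.φc (D.lie (Bs.u β) (Bs.u α)))))
        = Polynomial.C (
          sgB p • (R.φd (Bs.udual β) * R.φc (D.lie (Bs.u β) (D.form b (Bs.udual α) • Bs.u α)))
          + (sgB (Bs.par α) * kap (!p) (!Bs.par α)) • (R.φd (Bs.udual α) *
            R.φc (D.lie (D.form b (Bs.udual β) • Bs.u β) (Bs.u α)))) := by
      intro α hα β hβ
      rw [map_smul, P.leib_s _ (R.pφc hb) (R.pφd (Bs.pud _)),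
        P.leib_s _ (R.pφc hb) (R.pφd (Bs.pud _)), R.br_φφ, R.br_φc_φd b hα, R.br_φc_φd b hβ]
      rw [mul_zero, smul_zero, zero_add, ← Polynomial.C_mul, ← Polynomial.C_mul,
        ← Polynomial.C_mul, ← Algebra.smul_def, ← Algebra.smul_def, Polynomial.smul_C,
        ← Polynomial.C_add, Polynomial.smul_C]
      congr 1
      simp only [map_smul, LinearMap.smul_apply, mul_smul_comm, smul_smul, smul_add]
      rw [D.sgB_form hb (Bs.pud α), Bs.sgn_eq, add_comm]
      simp only [mul_assoc]
    rw [map_sum]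
    rw [Finset.sum_congr rfl fun α hα => by
      rw [map_sum, Finset.sum_congr rfl fun β hβ => e1 α hα β hβ]]
    simp only [← map_sum, Finset.sum_add_distrib]
    congr 1
    rw [Finset.sum_comm]
    simp only [← Finset.smul_sum, ← Finset.mul_sum, ← map_sum, ← LinearMap.sum_apply]
    change _ + ∑ α ∈ Bs.S, (sgB (Bs.par α) * kap (!p) (!Bs.par α)) • (R.φd (Bs.udual α) *
            R.φc (D.lie (Bs.πp b) (Bs.u α))) = _
    have e2 : ∀ α, (sgB (Bs.par α) * kap (!p) (!Bs.par α)) • (R.φd (Bs.udual α) *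
            R.φc (D.lie (Bs.πp b) (Bs.u α))) = sgB p • (R.φd (Bs.udual α) *
            R.φc (D.lie (Bs.u α) (Bs.πp b))) := by
      intro α
      rw [D.lie_skew_s (Bs.πp_par hb) (Bs.pu α)]
      cases p <;> cases Bs.par α <;> simp [sgB, kap]
    simp only [e2, ← Finset.smul_sum]
    rw [two_mul, add_smul]
    rfl
  unfold dd
  rw [map_add, map_add, map_add, map_smul, h1, h2, h4, R.br_φc_f]
  rw [Polynomial.smul_C, ← Polynomial.C_add, ← Polynomial.C_add, ← Polynomial.C_add]
  congr 1
  unfold Jel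
  rw [smul_smul, smul_add, ← mul_assoc]
  norm_num
  abel

lemma d0_φc {b : g} {p : Bool} (hb : D.σg b = sgB p • b) :
    R.d0 (R.φc b) = R.Jel (Bs.πp b) + sgB p • R.Φn b + algebraMap ℂ A (D.form b D.f) := by
  rw [d0_apply, P.skewC R.dd_odd (R.pφc hb) (R.br_φc_dd hb)]
  have hf : D.σg D.f = sgB false • D.f := by simp [sgB, D.f_even]
  have := D.sgB_form hb hf
  have h2 : sgB p • algebraMap ℂ A (D.form b D.f) = algebraMap ℂ A (D.form b D.f) := by
    rw [Algebra.smul_def, ← map_mul, this]; simp [sgB]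
  rw [smul_add, smul_add]
  conv_rhs => rw [← h2]
  cases p <;> simp [sgB]

lemma br_φd_φc (b : g) {γ : I} (hγ : γ ∈ Bs.S) :
    P.Br (R.φd (Bs.udual γ)) (R.φc b) =
      Polynomial.C (algebraMap ℂ A (Bs.sgn γ * D.form b (Bs.udual γ))) := by
  have h0 : ∀ α, P.Br (R.φd (Bs.udual γ)) (R.φc (Bs.u α)) =
      Polynomial.C (algebraMap ℂ A (Bs.sgn γ * D.form (Bs.u α) (Bs.udual γ))) := by
    intro α
    rw [P.skew_s (R.pφd (Bs.pud γ)) (R.pφc (Bs.pu α)), R.br_φc_φd _ hγ, P.opp_C, Bs.hdual,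
      Bs.sgn_eq]
    by_cases h : α = γ
    · subst h
      cases Bs.par α <;> simp [sgB, kap]
    · simp [h]
  conv_lhs => rw [← Bs.compl b]
  conv_rhs => rw [← Bs.compl b]
  simp only [map_sum, map_smul, h0, LinearMap.sum_apply, LinearMap.smul_apply, Finset.mul_sum]
  refine Finset.sum_congr rfl fun α _ => ?_
  rw [Polynomial.smul_C, Algebra.smul_def, ← map_mul]
  congr 2
  simp only [smul_eq_mul]
  ring

lemma d0_φd {γ : I} (hγ : γ ∈ Bs.S) :
    R.d0 (R.φd (Bs.udual γ)) = (1 / 2 : ℂ) • ∑ α ∈ Bs.S, ∑ β ∈ Bs.S,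
      (Bs.sgn α * D.form (D.lie (Bs.u β) (Bs.u α)) (Bs.udual γ)) •
        (R.φd (Bs.udual α) * R.φd (Bs.udual β)) := by
  have hι : ∀ α, P.Br (R.φd (Bs.udual γ)) (R.ι (Bs.u α)) = 0 := by
    intro α
    rw [P.skew_s (R.pφd (Bs.pud γ)) (R.pι (Bs.pu α)), R.br_curφd]
    simp [oppSubst]
  have h : P.Br (R.φd (Bs.udual γ)) R.dd = Polynomial.C (Bs.sgn γ •
      ((1 / 2 : ℂ) • ∑ α ∈ Bs.S, ∑ β ∈ Bs.S,
      (Bs.sgn α * D.form (D.lie (Bs.u β) (Bs.u α)) (Bs.udual γ)) •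
        (R.φd (Bs.udual α) * R.φd (Bs.udual β)))) := by
    unfold dd
    simp only [map_add, map_sum, map_smul, P.leib_s _ (R.pφd (Bs.pud γ)) (R.pφd (Bs.pud _)),
      R.br_φdφd, R.br_φdΦ, hι, R.br_φd_φc _ hγ]
    simp only [mul_zero, zero_mul, smul_zero, add_zero, zero_add, Finset.sum_const_zero]
    rw [smul_comm, ← Polynomial.smul_C]
    congr 1
    simp only [Finset.smul_sum, map_sum]
    refine Finset.sum_congr rfl fun α _ => Finset.sum_congr rfl fun β _ => ?_
    by_cases hp : xor (Bs.par β) (Bs.par α) = Bs.par γ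
    · rw [mul_smul_comm, ← Polynomial.C_mul, ← Polynomial.C_mul, Polynomial.smul_C,
        Polynomial.smul_C, Polynomial.smul_C, ← Algebra.commutes, ← Algebra.smul_def,
        mul_smul_comm, ← hp, Bs.sgn_eq, Bs.sgn_eq, ← hp]
      congr 1
      simp only [smul_smul]
      congr 1
      cases Bs.par α <;> cases Bs.par β <;> simp [sgB, kap]
    · rw [D.form_par (D.lie_par (Bs.pu β) (Bs.pu α)) (Bs.pud γ) hp]
      simp
  rw [d0_apply, P.skewC R.dd_odd (R.pφd (Bs.pud γ)) h, smul_smul, Bs.sgn_eq]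
  cases Bs.par γ <;> simp [sgB]

lemma d0_φd_mul (γ : I) (c : A) :
    R.d0 (R.φd (Bs.udual γ) * c) =
      R.d0 (R.φd (Bs.udual γ)) * c - Bs.sgn γ • (R.φd (Bs.udual γ) * R.d0 c) := by
  have hd : P.σ R.dd = sgB true • R.dd := by simp [sgB, R.dd_odd]
  simp only [d0_apply]
  rw [P.leib_s _ hd (R.pφd (Bs.pud γ)), Polynomial.coeff_add, Polynomial.coeff_smul,
    Polynomial.coeff_C_mul, Polynomial.coeff_mul_C, Bs.sgn_eq]
  cases Bs.par γ <;> simp [sgB, kap] <;> abel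

/-- The cubic identity following from the Jacobi identity. -/
lemma cubic (a : g) :
    ∑ γ ∈ Bs.S, R.d0 (R.φd (Bs.udual γ)) * R.φc (D.lie (Bs.u γ) a) =
      ∑ α ∈ Bs.S, ∑ β ∈ Bs.S, Bs.sgn α • (R.φd (Bs.udual α) *
        (R.φd (Bs.udual β) * R.φc (D.lie (Bs.u β) (D.lie (Bs.u α) a)))) := by
  have e1 : ∑ γ ∈ Bs.S, R.d0 (R.φd (Bs.udual γ)) * R.φc (D.lie (Bs.u γ) a) =
      (1 / 2 : ℂ) • ∑ α ∈ Bs.S, ∑ β ∈ Bs.S, Bs.sgn α • (R.φd (Bs.udual α) *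
        (R.φd (Bs.udual β) * R.φc (D.lie (D.lie (Bs.u β) (Bs.u α)) a))) := by
    refine (Finset.sum_congr rfl fun γ hγ =>
      congrArg (fun z => z * R.φc (D.lie (Bs.u γ) a)) (R.d0_φd hγ)).trans ?_
    simp only [smul_mul_assoc]
    rw [← Finset.smul_sum]
    congr 1
    simp only [smul_mul_assoc, Finset.sum_mul]
    rw [Finset.sum_comm]
    refine Finset.sum_congr rfl fun α hα => ?_
    rw [Finset.sum_comm]
    refine Finset.sum_congr rfl fun β hβ => ?_
    conv_rhs => rw [← Bs.πp_lie α β hα hβ]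
    unfold BasisData.πp
    simp only [map_sum, map_smul, LinearMap.sum_apply, LinearMap.smul_apply, Finset.mul_sum,
      Finset.smul_sum, mul_smul_comm, smul_smul, mul_assoc]
  rw [e1]
  set T := ∑ α ∈ Bs.S, ∑ β ∈ Bs.S, Bs.sgn α • (R.φd (Bs.udual α) *
        (R.φd (Bs.udual β) * R.φc (D.lie (Bs.u β) (D.lie (Bs.u α) a)))) with hT
  have e2 : ∑ α ∈ Bs.S, ∑ β ∈ Bs.S, Bs.sgn α • (R.φd (Bs.udual α) *
        (R.φd (Bs.udual β) * R.φc (D.lie (D.lie (Bs.u β) (Bs.u α)) a))) = T + T := by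
    conv_rhs =>
      rw [hT]
      arg 2
      rw [Finset.sum_comm]
    rw [← Finset.sum_add_distrib]
    refine Finset.sum_congr rfl fun α _ => ?_
    rw [← Finset.sum_add_distrib]
    refine Finset.sum_congr rfl fun β _ => ?_
    rw [D.jacobi_s a (Bs.pu β) (Bs.pu α), map_sub, mul_sub, mul_sub, smul_sub, sub_eq_add_neg]
    congr 1
    rw [← mul_assoc, ← mul_assoc, P.comm_s (R.pφd (Bs.pud α)) (R.pφd (Bs.pud β)),
      Bs.sgn_eq, Bs.sgn_eq]
    cases Bs.par α <;> cases Bs.par β <;> simp [sgB, kap]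
  rw [e2, ← two_smul ℂ T, smul_smul]
  norm_num

end BRST

/-- For `a ∈ g` let `J_a = a + ∑_{α∈S} φ^α φ_{[u_α,a]}` and
`K_a = J_{π_≤ a} - (-1)^{p(a)} Φ_a - (a|f)`.  Then for homogeneous `a` (of parity
sign `ε`):
`d_{(0)}(J_a) = ∑_{α∈S} (-1)^{p(α)} φ^α K_{[u_α,a]}
  + ∑_{α∈S} k (-1)^{p(α)} (u_α|a) ∂φ^α`. -/
theorem statement4
    (g : Type) [AddCommGroup g] [Module ℂ g] (D : SuperSetup g)
    (I : Type) [Fintype I] [DecidableEq I] (Bs : BasisData D I)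
    (A : Type) [Ring A] [Algebra ℂ A] (P : PVA A) (k : ℂ)
    (R : BRST D Bs P k)
    (a : g) (ε : ℂ) (ha : IsParity D a ε) :
    R.d0 (R.Jel a) =
      (∑ α ∈ Bs.S, Bs.sgn α • (R.φd (Bs.udual α) * R.Kel (D.lie (Bs.u α) a) (Bs.sgn α * ε)))
        + ∑ α ∈ Bs.S, (k * Bs.sgn α * D.form (Bs.u α) a) • P.δ (R.φd (Bs.udual α)) := by
  obtain ⟨p, hp, hε⟩ : ∃ p : Bool, D.σg a = sgB p • a ∧ ε = sgB p := by
    rcases ha with ⟨h1, h2⟩ | ⟨h1, h2⟩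
    · exact ⟨false, by simp [sgB, h2], by simp [sgB, h1]⟩
    · exact ⟨true, by simp [sgB, h2], by simp [sgB, h1]⟩
  subst hε
  have h0 : R.d0 (R.Jel a) = R.d0 (R.ι a) +
      ∑ γ ∈ Bs.S, R.d0 (R.φd (Bs.udual γ) * R.φc (D.lie (Bs.u γ) a)) := by
    unfold BRST.Jel
    rw [map_add, map_sum]
  simp only [R.d0_φd_mul] at h0
  rw [Finset.sum_sub_distrib, R.cubic, R.d0_ι hp] at h0
  rw [h0, add_right_comm]
  congr 1
  rw [← Finset.sum_sub_distrib, ← Finset.sum_add_distrib]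
  refine Finset.sum_congr rfl fun γ _ => ?_
  rw [← Finset.smul_sum, ← smul_sub, ← smul_add, ← Finset.mul_sum, ← mul_sub, ← mul_add]
  congr 2
  rw [R.d0_φc (D.lie_par (Bs.pu γ) hp)]
  have hs : sgB (xor (Bs.par γ) p) = Bs.sgn γ * sgB p := by
    rw [Bs.sgn_eq]
    cases p <;> cases Bs.par γ <;> simp [sgB]
  have hJ : R.Jel (D.lie (Bs.u γ) a) = R.Jel (Bs.πle (D.lie (Bs.u γ) a))
      + R.Jel (Bs.πp (D.lie (Bs.u γ) a)) := by
    rw [← R.Jel_add, Bs.πle_add]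
  have hJ' : R.Jel (Bs.πle (D.lie (Bs.u γ) a)) = R.Jel (D.lie (Bs.u γ) a)
      - R.Jel (Bs.πp (D.lie (Bs.u γ) a)) := by rw [hJ]; abel
  unfold BRST.Kel
  rw [hs, hJ']
  conv_rhs => rw [BRST.Jel]
  abel
end
end

section
/- For the building blocks K_a = J_{\pi_{\leq}a} - (-1)^{p(a)}\Phi_a - (a|f) in S(R), the \lambda-brackets are: {K_a{}_\lambda K_b} = K_{[a,b]} + \lambda k(a|b) if a,b \in \bigoplus_{i\leq 0}g(i); {K_a{}_\lambda K_b} = -K_{[a,b]} = ([a,b]|f) if a,b \in g(1/2); and {K_a{}_\lambda K_b} = 0 otherwise. -/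
open Polynomial

noncomputable section

section Helpers

/-- The sign attached to a parity. -/
def sb (p : Bool) : ℂ := if p then (-1 : ℂ) else 1
/-- The Koszul sign. -/
def sg (p q : Bool) : ℂ := if p && q then (-1 : ℂ) else 1

variable {g : Type} [AddCommGroup g] [Module ℂ g] {D : SuperSetup g}
  {I : Type} [Fintype I] [DecidableEq I] {Bs : BasisData D I}
  {A : Type} [Ring A] [Algebra ℂ A] {P : PVA A} {k : ℂ}

/-- `a` has parity `p`. -/
def HP (D : SuperSetup g) (a : g) (p : Bool) : Prop := D.σg a = sb p • a
/-- `x` has parity `p`. -/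
def AP (P : PVA A) (x : A) (p : Bool) : Prop := P.σ x = sb p • x

theorem hp_of_isParity {a : g} {ε : ℂ} (h : IsParity D a ε) : ∃ p, ε = sb p ∧ HP D a p := by
  rcases h with ⟨h1, h2⟩ | ⟨h1, h2⟩
  · exact ⟨false, by simp [sb, h1], by simp [HP, sb, h2]⟩
  · exact ⟨true, by simp [sb, h1], by simp [HP, sb, h2]⟩

theorem HP.lie {a b : g} {p q : Bool} (ha : HP D a p) (hb : HP D b q) :
    HP D (D.lie a b) (xor p q) := by
  unfold HP at *
  rw [D.σg_lie, ha, hb]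
  cases p <;> cases q <;> simp [sb]

theorem lie_skew' {a b : g} {p q : Bool} (ha : HP D a p) (hb : HP D b q) :
    D.lie a b = -(sg p q) • D.lie b a := by
  unfold HP at *
  cases p <;> cases q <;> simp [sb, sg] at *
  · exact D.lie_skew a b (Or.inl ha)
  · exact D.lie_skew a b (Or.inl ha)
  · exact D.lie_skew a b (Or.inr hb)
  · exact D.lie_skew_odd a b ha hb

theorem jacobi' {a b : g} {p q : Bool} (ha : HP D a p) (hb : HP D b q) (c : g) :
    D.lie a (D.lie b c) = D.lie (D.lie a b) c + sg p q • D.lie b (D.lie a c) := by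
  unfold HP at *
  cases p <;> cases q <;> simp [sb, sg] at *
  · exact D.jacobi a b c (Or.inl ha)
  · exact D.jacobi a b c (Or.inl ha)
  · exact D.jacobi a b c (Or.inr hb)
  · rw [D.jacobi_odd a b c ha hb, sub_eq_add_neg]

theorem skew' {x y : A} {p q : Bool} (hx : AP P x p) (hy : AP P y q) :
    P.Br x y = -(sg p q) • oppSubst P.δ (P.Br y x) := by
  unfold AP at *
  cases p <;> cases q <;> simp [sb, sg] at *
  · exact P.skew _ _ (Or.inl hx)
  · exact P.skew _ _ (Or.inl hx)
  · exact P.skew _ _ (Or.inr hy)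
  · exact P.skew_odd _ _ hx hy

theorem leib' {x y : A} {p q : Bool} (hx : AP P x p) (hy : AP P y q) (z : A) :
    P.Br x (y * z) = sg p q • (C y * P.Br x z) + P.Br x y * C z := by
  unfold AP at *
  cases p <;> cases q <;> simp [sb, sg] at *
  · exact P.leibniz _ _ _ (Or.inl hx)
  · exact P.leibniz _ _ _ (Or.inl hx)
  · exact P.leibniz _ _ _ (Or.inr hy)
  · exact P.leibniz_odd _ _ _ hx hy

theorem oppSubst_C (δ : A →ₗ[ℂ] A) (v : A) : oppSubst δ (C v) = C v := by
  unfold oppSubst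
  rw [Polynomial.sum_C_index] <;> simp

theorem oppSubst_zero (δ : A →ₗ[ℂ] A) : oppSubst δ (0 : Polynomial A) = 0 := by
  simp [oppSubst]

theorem skew_C {x y : A} {p q : Bool} (hx : AP P x p) (hy : AP P y q) {v : A}
    (h : P.Br y x = C v) : P.Br x y = -(sg p q) • C v := by
  rw [skew' hx hy, h, oppSubst_C]

theorem skew_zero {x y : A} {p q : Bool} (hx : AP P x p) (hy : AP P y q)
    (h : P.Br y x = 0) : P.Br x y = 0 := by
  rw [skew' hx hy, h, oppSubst_zero, smul_zero]

theorem br_one (x : A) : P.Br x 1 = 0 := by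
  have h := P.leibniz x 1 1 (Or.inr (map_one _))
  simpa using h

theorem one_br (x : A) : P.Br 1 x = 0 := by
  rw [P.skew 1 x (Or.inl (map_one _)), br_one, oppSubst_zero, neg_zero]

theorem br_alg (x : A) (c : ℂ) : P.Br x (algebraMap ℂ A c) = 0 := by
  rw [Algebra.algebraMap_eq_smul_one, map_smul, br_one, smul_zero]

theorem alg_br (x : A) (c : ℂ) : P.Br (algebraMap ℂ A c) x = 0 := by
  rw [Algebra.algebraMap_eq_smul_one, map_smul, LinearMap.smul_apply, one_br, smul_zero]

theorem mem_gwt {a : g} {i : ℚ} : a ∈ D.gwt i ↔ D.lie D.x a = (i : ℂ) • a := by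
  simp [SuperSetup.gwt, sub_eq_zero]

theorem lie_mem {a b : g} {i j : ℚ} (ha : a ∈ D.gwt i) (hb : b ∈ D.gwt j) :
    D.lie a b ∈ D.gwt (i + j) := by
  rw [mem_gwt] at *
  rw [D.jacobi _ _ _ (Or.inl D.x_even), ha, hb]
  simp [add_smul]

theorem f_mem : D.f ∈ D.gwt (-1) := by
  rw [mem_gwt, D.lie_xf]; simp

theorem form_wt {a b : g} {i j : ℚ} (ha : a ∈ D.gwt i) (hb : b ∈ D.gwt j) (h : i + j ≠ 0) :
    D.form a b = 0 := by
  rw [mem_gwt] at *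
  have h1 := D.form_invariant a D.x b
  rw [D.lie_skew a D.x (Or.inr D.x_even), ha, hb] at h1
  simp only [map_neg, map_smul, LinearMap.neg_apply, LinearMap.smul_apply, smul_eq_mul] at h1
  have h2 : ((i + j : ℚ) : ℂ) * D.form a b = 0 := by
    push_cast; linear_combination -h1
  rcases mul_eq_zero.1 h2 with h3 | h3
  · exact absurd (by exact_mod_cast h3) h
  · exact h3

theorem form_par {a b : g} {p q : Bool} (ha : HP D a p) (hb : HP D b q) (h : p ≠ q) :
    D.form a b = 0 := by
  have h1 := D.form_super a b
  rw [ha, hb] at h1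
  have : -(D.form a b) = D.form a b := by
    cases p <;> cases q <;> simp [sb] at h1 h <;> simpa using h1
  exact self_eq_neg.1 this.symm

theorem form_f_symm (a b : g) : D.form D.f (D.lie a b) = D.form (D.lie a b) D.f := by
  have h1 := D.form_invariant a b D.f
  have h2 := D.form_invariant a D.f b
  have h3 := D.form_invariant D.f a b
  rw [D.lie_skew b D.f (Or.inr D.f_even), map_neg] at h1
  rw [D.lie_skew a D.f (Or.inr D.f_even), map_neg, LinearMap.neg_apply] at h2
  linear_combination -h1 - h2 - h3

theorem πle_of_le {a : g} {i : ℚ} (ha : a ∈ D.gwt i) (hi : i ≤ 0) : Bs.πle a = a := by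
  conv_rhs => rw [← Bs.compl a]
  unfold BasisData.πle
  apply Finset.sum_subset (Finset.filter_subset _ _)
  intro α _ hα
  simp only [Finset.mem_filter, Finset.mem_univ, true_and, not_le] at hα
  rw [form_wt ha (Bs.hud α) (by linarith), zero_smul]

theorem πle_of_pos {a : g} {i : ℚ} (ha : a ∈ D.gwt i) (hi : 0 < i) : Bs.πle a = 0 := by
  unfold BasisData.πle
  apply Finset.sum_eq_zero
  intro α hα
  simp only [Finset.mem_filter, Finset.mem_univ, true_and] at hα
  rw [form_wt ha (Bs.hud α) (by linarith), zero_smul]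

theorem sumS {a : g} {i : ℚ} (ha : a ∈ D.gwt i) (hi : 0 < i) :
    ∑ α ∈ Bs.S, D.form a (Bs.udual α) • Bs.u α = a := by
  conv_rhs => rw [← Bs.compl a]
  unfold BasisData.S
  apply Finset.sum_subset (Finset.filter_subset _ _)
  intro α _ hα
  simp only [Finset.mem_filter, Finset.mem_univ, true_and, not_lt] at hα
  rw [form_wt ha (Bs.hud α) (by linarith), zero_smul]

theorem sumS_nonpos {a : g} {i : ℚ} (ha : a ∈ D.gwt i) (hi : i ≤ 0) :
    ∑ α ∈ Bs.S, D.form a (Bs.udual α) • Bs.u α = 0 := by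
  apply Finset.sum_eq_zero
  intro α hα
  simp only [BasisData.S, Finset.mem_filter, Finset.mem_univ, true_and] at hα
  rw [form_wt ha (Bs.hud α) (by linarith), zero_smul]

variable (R : BRST D Bs P k)

theorem hpu (α : I) : HP D (Bs.u α) (Bs.par α) := Bs.hσu α
theorem hpud (α : I) : HP D (Bs.udual α) (Bs.par α) := Bs.hσud α

theorem apι {a : g} {p : Bool} (ha : HP D a p) : AP P (R.ι a) p := by
  unfold AP; rw [R.σι, ha, map_smul]
theorem apΦ {a : g} {p : Bool} (ha : HP D a p) : AP P (R.Φn a) p := by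
  unfold AP; rw [R.σΦ, ha, map_smul]
theorem apφc {a : g} {p : Bool} (ha : HP D a p) : AP P (R.φc a) (!p) := by
  unfold AP; rw [R.σφc, ha, map_smul]; cases p <;> simp [sb]
theorem apφd {a : g} {p : Bool} (ha : HP D a p) : AP P (R.φd a) (!p) := by
  unfold AP; rw [R.σφd, ha, map_smul]; cases p <;> simp [sb]

theorem AP.mul {x y : A} {p q : Bool} (hx : AP P x p) (hy : AP P y q) :
    AP P (x * y) (xor p q) := by
  unfold AP at *
  rw [map_mul, hx, hy]
  cases p <;> cases q <;> simp [sb]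

/-- The fermionic part of `J_a`. -/
def GG (a : g) : A := ∑ α ∈ Bs.S, R.φd (Bs.udual α) * R.φc (D.lie (Bs.u α) a)

theorem apG {a : g} {p : Bool} (ha : HP D a p) : AP P (GG R a) p := by
  unfold AP GG
  rw [map_sum, Finset.smul_sum]
  refine Finset.sum_congr rfl fun α _ => ?_
  have := (apφd R (hpud (Bs := Bs) α)).mul (apφc R ((hpu (Bs := Bs) α).lie ha))
  unfold AP at this
  rw [this]
  cases Bs.par α <;> cases p <;> rfl

/-- If `x` commutes with the charged fermions it commutes with the fermionic part of `J_a`. -/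
theorem br_G_zero {x : A} {p : Bool} (hx : AP P x p) (h1 : ∀ α, P.Br x (R.φd (Bs.udual α)) = 0)
    (a : g) (h2 : ∀ α, P.Br x (R.φc (D.lie (Bs.u α) a)) = 0) : P.Br x (GG R a) = 0 := by
  unfold GG
  rw [map_sum]
  refine Finset.sum_eq_zero fun α _ => ?_
  rw [leib' hx (apφd R (hpud (Bs := Bs) α)), h1, h2]
  simp

theorem br_φd_φc {d : g} {i : ℚ} {s : Bool} (hd : d ∈ D.gwt i) (hs : HP D d s) {β : I}
    (hβ : β ∈ Bs.S) : P.Br (R.φd (Bs.udual β)) (R.φc d) =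
      -(sg (!Bs.par β) (!s)) • C (algebraMap ℂ A (D.form d (Bs.udual β))) := by
  simp only [BasisData.S, Finset.mem_filter, Finset.mem_univ, true_and] at hβ
  by_cases hi : 0 < i
  · exact skew_C (apφd R (hpud β)) (apφc R hs)
      (R.br_φφd i _ hi (by linarith) d hd _ (Bs.hud β))
  · rw [R.φc_proj i (by linarith) d hd, form_wt hd (Bs.hud β) (by linarith)]
    simp

theorem br_G_φc {a c : g} {i j : ℚ} {r s : Bool} (ha : HP D a r) (hc : HP D c s)
    (hai : a ∈ D.gwt i) (hi : i ≤ 0) (hcj : c ∈ D.gwt j) :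
    P.Br (GG R a) (R.φc c) = sb r • C (R.φc (D.lie a c)) := by
  by_cases hj : 0 < j
  · have h : P.Br (R.φc c) (GG R a) = C (R.φc (D.lie c a)) := by
      unfold GG
      conv_rhs => rw [← sumS (Bs := Bs) hcj hj]
      simp only [map_sum, LinearMap.sum_apply]
      refine Finset.sum_congr rfl fun α hα => ?_
      simp only [BasisData.S, Finset.mem_filter, Finset.mem_univ, true_and] at hα
      rw [leib' (apφc R hc) (apφd R (hpud (Bs := Bs) α)), R.br_φφ,
        R.br_φφd j _ hj (by linarith) c hcj _ (Bs.hud α), ← C_mul]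
      simp [Algebra.smul_def]
    rw [skew_C (apG R ha) (apφc R hc) h, lie_skew' hc ha, map_smul, ← smul_C, smul_smul]
    congr 1
    cases r <;> cases s <;> simp [sg, sb]
  · rw [R.φc_proj j (by linarith) c hcj, R.φc_proj (i + j) (by linarith) _ (lie_mem hai hcj)]
    simp

theorem br_G_φd {a : g} {i : ℚ} {r : Bool} (ha : HP D a r) (hai : a ∈ D.gwt i)
    {β : I} (hβ : β ∈ Bs.S) :
    P.Br (GG R a) (R.φd (Bs.udual β)) =
      ∑ α ∈ Bs.S, D.form (D.lie (Bs.u α) a) (Bs.udual β) • C (R.φd (Bs.udual α)) := by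
  have h : P.Br (R.φd (Bs.udual β)) (GG R a) = C (∑ α ∈ Bs.S,
      (-(sg (!Bs.par β) (!Bs.par α) * sg (!Bs.par β) (!(xor (Bs.par α) r)))
        * D.form (D.lie (Bs.u α) a) (Bs.udual β)) • R.φd (Bs.udual α)) := by
    unfold GG
    rw [map_sum, map_sum]
    refine Finset.sum_congr rfl fun α _ => ?_
    rw [leib' (apφd R (hpud (Bs := Bs) β)) (apφd R (hpud (Bs := Bs) α)), R.br_φdφd,
      br_φd_φc R (lie_mem (Bs.hu α) hai) ((hpu α).lie ha) hβ, zero_mul, add_zero,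
      mul_smul_comm, smul_smul, ← C_mul, smul_C, ← Algebra.commutes, ← Algebra.smul_def,
      smul_smul]
    congr 2
    ring
  rw [skew_C (apG R ha) (apφd R (hpud (Bs := Bs) β)) h, map_sum, Finset.smul_sum]
  refine Finset.sum_congr rfl fun α _ => ?_
  rw [← smul_C, smul_smul]
  by_cases hp : xor (Bs.par α) r = Bs.par β
  · congr 1
    rw [← hp]
    cases Bs.par α <;> cases r <;> simp [sg]
  · rw [form_par ((hpu α).lie ha) (hpud β) hp]
    simp

theorem br_G_G {a b : g} {i j : ℚ} {r s : Bool} (ha : HP D a r) (hb : HP D b s)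
    (hai : a ∈ D.gwt i) (hi : i ≤ 0) (hbj : b ∈ D.gwt j) (hj : j ≤ 0) :
    P.Br (GG R a) (GG R b) = C (GG R (D.lie a b)) := by
  have h1 : P.Br (GG R a) (GG R b) = ∑ β ∈ Bs.S,
      (sg r (Bs.par β) • C (R.φd (Bs.udual β) * R.φc (D.lie a (D.lie (Bs.u β) b)))
       + ∑ α ∈ Bs.S, D.form (D.lie (Bs.u α) a) (Bs.udual β) •
          C (R.φd (Bs.udual α) * R.φc (D.lie (Bs.u β) b))) := by
    conv_lhs => rw [show GG R b = ∑ β ∈ Bs.S, R.φd (Bs.udual β) * R.φc (D.lie (Bs.u β) b)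
      from rfl]
    rw [map_sum]
    refine Finset.sum_congr rfl fun β hβ => ?_
    rw [leib' (apG R ha) (apφd R (hpud (Bs := Bs) β)), br_G_φd R ha hai hβ,
      br_G_φc R ha ((hpu β).lie hb) hai hi (lie_mem (Bs.hu β) hbj), Finset.sum_mul,
      mul_smul_comm, smul_smul, ← C_mul]
    congr 1
    · congr 1
      cases r <;> cases Bs.par β <;> simp [sg, sb]
    · refine Finset.sum_congr rfl fun α _ => ?_
      rw [smul_mul_assoc, ← C_mul]
  rw [h1, Finset.sum_add_distrib, Finset.sum_comm (s := Bs.S) (t := Bs.S),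
    ← Finset.sum_add_distrib]
  conv_rhs => unfold GG
  rw [map_sum]
  refine Finset.sum_congr rfl fun α _ => ?_
  have h2 : ∑ β ∈ Bs.S, D.form (D.lie (Bs.u α) a) (Bs.udual β) •
          C (R.φd (Bs.udual α) * R.φc (D.lie (Bs.u β) b))
      = C (R.φd (Bs.udual α) * R.φc (D.lie (D.lie (Bs.u α) a) b)) := by
    have hm := lie_mem (Bs.hu α) hai
    have h3 : R.φc (D.lie (D.lie (Bs.u α) a) b) = R.φc (D.lie
        (∑ β ∈ Bs.S, D.form (D.lie (Bs.u α) a) (Bs.udual β) • Bs.u β) b) := by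
      by_cases hp : 0 < Bs.jdeg α + i
      · rw [sumS hm hp]
      · rw [sumS_nonpos hm (by linarith), R.φc_proj _ (by linarith) _ (lie_mem hm hbj)]
        simp
    rw [h3]
    simp only [map_sum, LinearMap.sum_apply, Finset.mul_sum, map_smul, LinearMap.smul_apply,
      mul_smul_comm, smul_C]
  rw [h2, jacobi' (hpu α) ha, map_add, mul_add, map_add, map_smul, mul_smul_comm, ← smul_C,
    add_comm]
  congr 2
  cases r <;> cases Bs.par α <;> rfl

theorem Jel_eq (a : g) : R.Jel a = R.ι a + GG R a := rfl

theorem br_J_J {a b : g} {i j : ℚ} {r s : Bool} (ha : HP D a r) (hb : HP D b s)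
    (hai : a ∈ D.gwt i) (hi : i ≤ 0) (hbj : b ∈ D.gwt j) (hj : j ≤ 0) :
    P.Br (R.Jel a) (R.Jel b) = C (R.Jel (D.lie a b))
      + monomial 1 (algebraMap ℂ A (k * D.form a b)) := by
  have hz : ∀ {a b : g} {r : Bool}, HP D a r → P.Br (R.ι a) (GG R b) = 0 := fun {a b r} h =>
    br_G_zero R (apι R h) (fun α => R.br_curφd _ _) b (fun α => R.br_curφc _ _)
  simp only [Jel_eq, map_add, LinearMap.add_apply]
  rw [hz ha, skew_zero (apG R ha) (apι R hb) (hz hb), br_G_G R ha hb hai hi hbj hj, R.br_cur]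
  abel

theorem br_Φ_J {a b : g} {r s : Bool} (ha : HP D a r) (hb : HP D b s) :
    P.Br (R.Φn a) (R.Jel b) = 0 := by
  rw [Jel_eq, map_add, skew_zero (apΦ R ha) (apι R hb) (R.br_curΦ _ _), zero_add]
  exact br_G_zero R (apΦ R ha)
    (fun α => skew_zero (apΦ R ha) (apφd R (hpud α)) (R.br_φdΦ _ _)) b
    (fun α => skew_zero (apΦ R ha) (apφc R ((hpu α).lie hb)) (R.br_φcΦ _ _))

theorem apJ {a : g} {p : Bool} (ha : HP D a p) : AP P (R.Jel a) p := by
  have h1 := apι R ha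
  have h2 := apG R ha
  unfold AP at *
  rw [Jel_eq, map_add, h1, h2, smul_add]

theorem Jel_zero : R.Jel 0 = 0 := by simp [BRST.Jel]

theorem Kel_le {a : g} {i : ℚ} (ha : a ∈ D.gwt i) (hi : i ≤ 0) (ε : ℂ) :
    R.Kel a ε = R.Jel a := by
  unfold BRST.Kel
  rw [πle_of_le ha hi, R.Φn_proj i (by linarith) a ha, form_wt ha f_mem (by linarith)]
  simp

theorem Kel_half {a : g} (ha : a ∈ D.gwt (1 / 2 : ℚ)) (ε : ℂ) :
    R.Kel a ε = -(ε • R.Φn a) := by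
  unfold BRST.Kel
  rw [πle_of_pos ha (by norm_num), form_wt ha f_mem (by norm_num), Jel_zero]
  simp

theorem Kel_pos {a : g} {i : ℚ} (ha : a ∈ D.gwt i) (hi : 0 < i) (hi' : i ≠ 1 / 2) (ε : ℂ) :
    R.Kel a ε = algebraMap ℂ A (-D.form a D.f) := by
  unfold BRST.Kel
  rw [πle_of_pos ha hi, R.Φn_proj i hi' a ha, Jel_zero]
  simp

end Helpers

/-- For the building blocks
`K_a = J_{π_≤ a} - (-1)^{p(a)} Φ_a - (a|f)` in `S(R)`, the `λ`-brackets are: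
`{K_a λ K_b} = K_{[a,b]} + λk(a|b)` if `a, b ∈ ⊕_{i≤0} g(i)`;
`{K_a λ K_b} = -K_{[a,b]} = ([a,b]|f)` if `a, b ∈ g(1/2)`; and
`{K_a λ K_b} = 0` otherwise. -/
theorem statement5
    (g : Type) [AddCommGroup g] [Module ℂ g] (D : SuperSetup g)
    (I : Type) [Fintype I] [DecidableEq I] (Bs : BasisData D I)
    (A : Type) [Ring A] [Algebra ℂ A] (P : PVA A) (k : ℂ)
    (R : BRST D Bs P k) :
    (∀ (i j : ℚ), i ≤ 0 → j ≤ 0 → ∀ a ∈ D.gwt i, ∀ b ∈ D.gwt j,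
      ∀ εa εb : ℂ, IsParity D a εa → IsParity D b εb →
        P.Br (R.Kel a εa) (R.Kel b εb) =
          Polynomial.C (R.Kel (D.lie a b) (εa * εb))
            + Polynomial.monomial 1 (algebraMap ℂ A (k * D.form a b))) ∧
    (∀ a ∈ D.gwt (1 / 2 : ℚ), ∀ b ∈ D.gwt (1 / 2 : ℚ),
      ∀ εa εb : ℂ, IsParity D a εa → IsParity D b εb →
        P.Br (R.Kel a εa) (R.Kel b εb) = - Polynomial.C (R.Kel (D.lie a b) (εa * εb)) ∧
        P.Br (R.Kel a εa) (R.Kel b εb) =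
          Polynomial.C (algebraMap ℂ A (D.form (D.lie a b) D.f))) ∧
    (∀ (i j : ℚ), ¬ (i ≤ 0 ∧ j ≤ 0) → ¬ (i = 1 / 2 ∧ j = 1 / 2) →
      ∀ a ∈ D.gwt i, ∀ b ∈ D.gwt j,
        ∀ εa εb : ℂ, IsParity D a εa → IsParity D b εb →
          P.Br (R.Kel a εa) (R.Kel b εb) = 0) := by
  refine ⟨?_, ?_, ?_⟩
  · intro i j hi hj a ha b hb εa εb hpa hpb
    obtain ⟨r, -, hr⟩ := hp_of_isParity hpa
    obtain ⟨s, -, hs⟩ := hp_of_isParity hpb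
    rw [Kel_le R ha hi, Kel_le R hb hj, Kel_le R (lie_mem ha hb) (by linarith)]
    exact br_J_J R hr hs ha hi hb hj
  · intro a ha b hb εa εb hpa hpb
    obtain ⟨r, rfl, hr⟩ := hp_of_isParity hpa
    obtain ⟨s, rfl, hs⟩ := hp_of_isParity hpb
    have h : P.Br (R.Kel a (sb r)) (R.Kel b (sb s)) =
        C (algebraMap ℂ A (D.form (D.lie a b) D.f)) := by
      rw [Kel_half R ha, Kel_half R hb]
      simp only [map_neg, map_smul, LinearMap.neg_apply, LinearMap.smul_apply]
      rw [R.br_ΦΦ a ha b hb, form_f_symm, smul_neg, neg_neg, smul_smul]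
      by_cases h : xor r s = false
      · cases r <;> cases s <;> simp [sb] at h ⊢
      · rw [form_par (hr.lie hs) (show HP D D.f false by simp [HP, sb, D.f_even]) h]
        simp
    refine ⟨?_, h⟩
    rw [h, Kel_pos R (lie_mem ha hb) (by norm_num) (by norm_num)]
    simp
  · intro i j h1 h2 a ha b hb εa εb hpa hpb
    obtain ⟨r, -, hr⟩ := hp_of_isParity hpa
    obtain ⟨s, -, hs⟩ := hp_of_isParity hpb
    by_cases hi : 0 < i ∧ i ≠ 1 / 2
    · rw [Kel_pos R ha hi.1 hi.2, alg_br]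
    by_cases hj : 0 < j ∧ j ≠ 1 / 2
    · rw [Kel_pos R hb hj.1 hj.2, br_alg]
    by_cases hi0 : i ≤ 0
    · have hj' : j = 1 / 2 := by
        by_contra hne
        exact hj ⟨by by_contra hle; exact h1 ⟨hi0, not_lt.1 hle⟩, hne⟩
      subst hj'
      rw [Kel_le R ha hi0, Kel_half R hb, map_neg, map_smul,
        skew_zero (apJ R hr) (apΦ R hs) (br_Φ_J R hs hr)]
      simp
    · have hi' : i = 1 / 2 := by
        by_contra hne
        exact hi ⟨not_le.1 hi0, hne⟩
      subst hi'
      have hj0 : j ≤ 0 := by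
        by_contra hle
        exact hj ⟨not_le.1 hle, fun h => h2 ⟨rfl, h⟩⟩
      rw [Kel_le R hb hj0, Kel_half R ha, map_neg, map_smul, LinearMap.neg_apply,
        LinearMap.smul_apply, br_Φ_J R hr hs]
      simp
end
end
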